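/- There exists a constant C > 0 such that for all η ∈ (0, 1/2], the statement B(η, η², η^{−C/η}) holds; that is, for any independent finitely supported random variables X, Y on G = 𝔽₂ⁿ, there is a subspace V ⊆ G with H[𝐔_V] ≤ η^{−C/η} (H[X] + H[Y]) such that H[π_V(X) + π_V(Y)] ≥ (1 − η)(H[π_V(X)] + H[π_V(Y)]) − η² (H[X] + H[Y]). -/

import Mathlib

open Real Pointwise

noncomputable section

abbrev Fvec (n : ℕ) : Type := Fin n → ZMod 2

/-- Shannon entropy (natural log) of a finitely supported distribution. -/
def ent {A : Type*} (p : A → ℝ) : ℝ := ∑ᶠ a, Real.negMulLog (p a)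

/-- `p` is a (finitely supported) probability distribution. -/
def IsDist {A : Type*} (p : A → ℝ) : Prop := (∀ a, 0 ≤ p a) ∧ ∑ᶠ a, p a = 1

/-- Pushforward of a distribution along a map: the distribution of `f(X)` for `X ∼ p`. -/
def push {A B : Type*} (f : A → B) (p : A → ℝ) : B → ℝ := fun b => ∑ᶠ a ∈ f ⁻¹' {b}, p a

/-- Joint distribution of a pair of independent random variables. -/
def prodDist {A B : Type*} (p : A → ℝ) (q : B → ℝ) : A × B → ℝ := fun z => p z.1 * q z.2

/-- Distribution of `X + Y` for independent `X ∼ p`, `Y ∼ q`. -/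
def conv {A : Type*} [AddGroup A] (p q : A → ℝ) : A → ℝ := fun z => ∑ᶠ x, p x * q (z - x)

/-- The distribution of `X` conditioned on `U = b`, where `r` is the joint distribution of `(X, U)`. -/
def fiber {A B : Type*} (r : A × B → ℝ) (b : B) : A → ℝ := fun a => r (a, b) / push Prod.snd r b

/-- Conditional entropy `H[X | U]` of a joint distribution `r` of `(X, U)`. -/
def condEnt {A B : Type*} (r : A × B → ℝ) : ℝ := ∑ᶠ b, push Prod.snd r b * ent (fiber r b)

/-- Doubling mass `s[X ; Y]` (of independent copies with distributions `p`, `q`). -/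
def sDouble {A : Type*} [AddGroup A] (p q : A → ℝ) : ℝ := ent p + ent q - ent (conv p q)

/-- Conditional doubling mass `s[X | U ; Y | W] = 𝔼_{u ∼ U, w ∼ W} s[X_u ; Y_w]`,
where `r1`, `r2` are the joint distributions of `(X, U)` and `(Y, W)`. -/
def sCond {A U W : Type*} [AddGroup A] (r1 : A × U → ℝ) (r2 : A × W → ℝ) : ℝ :=
  ∑ᶠ u, ∑ᶠ w, push Prod.snd r1 u * push Prod.snd r2 w * sDouble (fiber r1 u) (fiber r2 w)

/-- Conditional mutual information `I[A : B | S]` of a joint distribution of `(A, B, S)`. -/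
def condMI {A B S : Type*} (r : A × B × S → ℝ) : ℝ :=
  ent (push (fun z => (z.1, z.2.2)) r) + ent (push (fun z => z.2) r)
    - ent r - ent (push (fun z => z.2.2) r)

/-- Uniform distribution on a set. -/
def unifOn {A : Type*} (s : Set A) : A → ℝ := s.indicator fun _ => (Nat.card s : ℝ)⁻¹

/-- Entropic Ruzsa distance `d[X ; Y]`. -/
def dRuzsa {A : Type*} [AddGroup A] (p q : A → ℝ) : ℝ := ent (conv p q) - ent p / 2 - ent q / 2

/-- Joint distribution of `(X, X + Y)` for independent `X ∼ p`, `Y ∼ q`. -/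
def jointSum {A : Type*} [AddGroup A] (p q : A → ℝ) : A × A → ℝ :=
  push (fun z : A × A => (z.1, z.1 + z.2)) (prodDist p q)

/-- Joint distribution of `(X, π_V(X))`. -/
def selfProj {n : ℕ} (V : Submodule (ZMod 2) (Fvec n)) (p : Fvec n → ℝ) :
    Fvec n × (Fvec n ⧸ V) → ℝ := push (fun x => (x, V.mkQ x)) p

/-- Joint distribution of independent `(X₁, X₂, Y₁, Y₂)` with `X₁, X₂ ∼ p` and `Y₁, Y₂ ∼ q`. -/
def quad {A : Type*} (p q : A → ℝ) : A × A × A × A → ℝ :=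
  fun z => p z.1 * p z.2.1 * q z.2.2.1 * q z.2.2.2

/-- Distribution of `X₁ + ⋯ + X_k` for independent `Xᵢ ∼ p i`. -/
def indepSum {A : Type*} [AddCommGroup A] (k : ℕ) (p : Fin k → A → ℝ) : A → ℝ :=
  push (fun x : Fin k → A => ∑ i, x i) (fun x => ∏ i, p i (x i))

/-- Statement `A(η, L, c)` from the paper. -/
def StA (η L c : ℝ) : Prop :=
  ∀ (n : ℕ) (p q : Fvec n → ℝ), IsDist p → IsDist q →
    ent (conv p q) ≤ (1 - η) * (ent p + ent q) →
    ∃ V : Submodule (ZMod 2) (Fvec n),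
      ent (unifOn (V : Set (Fvec n))) ≤ L * (ent p + ent q) ∧
      ent (push V.mkQ p) + ent (push V.mkQ q) ≤ (1 - c) * (ent p + ent q)

/-- Statement `B(η, ε, L)` from the paper. -/
def StB (η ε L : ℝ) : Prop :=
  ∀ (n : ℕ) (p q : Fvec n → ℝ), IsDist p → IsDist q →
    ∃ V : Submodule (ZMod 2) (Fvec n),
      ent (unifOn (V : Set (Fvec n))) ≤ L * (ent p + ent q) ∧
      ent (conv (push V.mkQ p) (push V.mkQ q)) ≥
        (1 - η) * (ent (push V.mkQ p) + ent (push V.mkQ q)) - ε * (ent p + ent q)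


namespace S19
open Classical
set_option linter.unusedSectionVars false


section basic
variable {Ω Ω' A B C : Type*} [Fintype Ω] [Fintype Ω'] [Fintype A] [Fintype B] [Fintype C]

/-- probability weights -/
def IsPr (P : Ω → ℝ) : Prop := (∀ w, 0 ≤ P w) ∧ ∑ w, P w = 1

/-- law of a random variable -/
def law (P : Ω → ℝ) (X : Ω → A) : A → ℝ := fun a => ∑ w, if X w = a then P w else 0

lemma law_def (P : Ω → ℝ) (X : Ω → A) (a : A) :
    law P X a = ∑ w, if X w = a then P w else 0 := rfl

/-- entropy of a weight function -/
def E (p : A → ℝ) : ℝ := ∑ a, negMulLog (p a)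

/-- entropy of a random variable -/
def H (P : Ω → ℝ) (X : Ω → A) : ℝ := E (law P X)

lemma law_nonneg {P : Ω → ℝ} (hP : IsPr P) (X : Ω → A) (a : A) : 0 ≤ law P X a := by
  unfold law
  apply Finset.sum_nonneg
  intro w _
  split_ifs
  · exact hP.1 w
  · exact le_rfl

lemma sum_law_mul (P : Ω → ℝ) (X : Ω → A) (g : A → ℝ) :
    ∑ a, law P X a * g a = ∑ w, P w * g (X w) := by
  unfold law
  simp_rw [Finset.sum_mul]
  rw [Finset.sum_comm]
  apply Finset.sum_congr rfl
  intro w _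
  simp [ite_mul]

lemma sum_law (P : Ω → ℝ) (X : Ω → A) : ∑ a, law P X a = ∑ w, P w := by
  simpa using sum_law_mul P X (fun _ => 1)

lemma isPr_law {P : Ω → ℝ} (hP : IsPr P) (X : Ω → A) : IsPr (law P X) :=
  ⟨law_nonneg hP X, by rw [sum_law]; exact hP.2⟩

lemma law_law (P : Ω → ℝ) (X : Ω → A) (f : A → B) :
    law (law P X) f = law P (fun w => f (X w)) := by
  funext b
  have := sum_law_mul P X (fun a => if f a = b then 1 else 0)
  simpa [law] using this

lemma law_id (P : Ω → ℝ) : law P (fun w => w) = P := by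
  funext a; simp [law]

lemma H_law (P : Ω → ℝ) (X : Ω → A) (f : A → B) :
    H (law P X) f = H P (fun w => f (X w)) := by
  unfold H; rw [law_law]

lemma H_id (P : Ω → ℝ) : H P (fun w => w) = E P := by
  unfold H; rw [law_id]

lemma E_law (P : Ω → ℝ) (X : Ω → A) : E (law P X) = H P X := rfl

lemma H_eq (P : Ω → ℝ) (X : Ω → A) :
    H P X = ∑ w, P w * (- log (law P X (X w))) := by
  rw [← sum_law_mul P X (fun a => - log (law P X a))]
  unfold H E
  apply Finset.sum_congr rfl
  intro a _
  simp [negMulLog]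

lemma le_law {P : Ω → ℝ} (hP : IsPr P) (X : Ω → A) (w : Ω) : P w ≤ law P X (X w) := by
  unfold law
  have := Finset.single_le_sum (f := fun v => if X v = X w then P v else 0)
    (fun v _ => by split_ifs; exacts [hP.1 v, le_rfl]) (Finset.mem_univ w)
  simpa using this

lemma law_le_one {P : Ω → ℝ} (hP : IsPr P) (X : Ω → A) (a : A) : law P X a ≤ 1 := by
  have h := isPr_law hP X
  rw [← h.2]
  exact Finset.single_le_sum (fun b _ => h.1 b) (Finset.mem_univ a)

lemma E_nonneg {P : Ω → ℝ} (hP : IsPr P) : 0 ≤ E P := by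
  apply Finset.sum_nonneg
  intro a _
  apply negMulLog_nonneg (hP.1 a)
  rw [← hP.2]
  exact Finset.single_le_sum (fun b _ => hP.1 b) (Finset.mem_univ a)

lemma H_nonneg {P : Ω → ℝ} (hP : IsPr P) (X : Ω → A) : 0 ≤ H P X := E_nonneg (isPr_law hP X)

lemma H_le_of_det {P : Ω → ℝ} (hP : IsPr P) (X : Ω → A) (Y : Ω → B)
    (h : ∀ w v, P w ≠ 0 → P v ≠ 0 → X w = X v → Y w = Y v) : H P Y ≤ H P X := by
  rw [H_eq, H_eq]
  apply Finset.sum_le_sum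
  intro w _
  rcases eq_or_lt_of_le (hP.1 w) with h0 | h0
  · simp [← h0]
  · apply mul_le_mul_of_nonneg_left _ h0.le
    apply neg_le_neg
    apply log_le_log (lt_of_lt_of_le h0 (le_law hP X w))
    unfold law
    apply Finset.sum_le_sum
    intro v _
    by_cases hv : P v = 0
    · simp [hv]
    · by_cases hx : X v = X w
      · rw [if_pos hx, if_pos (h v w hv h0.ne' hx)]
      · rw [if_neg hx]
        split_ifs
        · exact hP.1 v
        · exact le_rfl

lemma H_le {P : Ω → ℝ} (hP : IsPr P) (X : Ω → A) (Y : Ω → B)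
    (h : ∀ w v, X w = X v → Y w = Y v) : H P Y ≤ H P X :=
  H_le_of_det hP X Y (fun w v _ _ => h w v)

lemma H_congr {P : Ω → ℝ} (hP : IsPr P) (X : Ω → A) (Y : Ω → B)
    (h : ∀ w v, X w = X v ↔ Y w = Y v) : H P X = H P Y :=
  le_antisymm (H_le hP Y X (fun w v => (h w v).2)) (H_le hP X Y (fun w v => (h w v).1))

lemma submod {P : Ω → ℝ} (hP : IsPr P) (X : Ω → A) (Y : Ω → B) (Z : Ω → C) :
    H P (fun w => (X w, Y w, Z w)) + H P Z ≤
      H P (fun w => (X w, Z w)) + H P (fun w => (Y w, Z w)) := by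
  rw [H_eq P Z, H_eq P (fun w => (X w, Z w)), H_eq P (fun w => (Y w, Z w)),
    H_eq P (fun w => (X w, Y w, Z w)), ← Finset.sum_add_distrib, ← Finset.sum_add_distrib]
  set lx := law P (fun w => (X w, Z w)) with hlx
  set ly := law P (fun w => (Y w, Z w)) with hly
  set lz := law P Z with hlz
  set l := law P (fun w => (X w, Y w, Z w)) with hl
  have key : ∑ w, P w * (lx (X w, Z w) * ly (Y w, Z w) / (l (X w, Y w, Z w) * lz (Z w))) ≤ 1 := by
    rw [← sum_law_mul P (fun w => (X w, Y w, Z w))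
      (fun t => lx (t.1, t.2.2) * ly (t.2.1, t.2.2) / (l t * lz t.2.2))]
    calc _ ≤ ∑ t : A × B × C, lx (t.1, t.2.2) * ly (t.2.1, t.2.2) / lz t.2.2 := by
          apply Finset.sum_le_sum
          intro t _
          change l t * _ ≤ _
          have h1 : 0 ≤ lx (t.1, t.2.2) := law_nonneg hP _ _
          have h2 : 0 ≤ ly (t.2.1, t.2.2) := law_nonneg hP _ _
          have h3 : 0 ≤ lz t.2.2 := law_nonneg hP _ _
          by_cases h0 : l t = 0
          · rw [h0]; simp; positivity
          · apply le_of_eq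
            field_simp
      _ = ∑ c, (∑ a, lx (a, c)) * (∑ b, ly (b, c)) / lz c := by
          simp_rw [Fintype.sum_prod_type, Finset.sum_mul_sum, Finset.sum_div]
          rw [Finset.sum_congr rfl (fun a _ => Finset.sum_comm)]
          rw [Finset.sum_comm]
      _ ≤ ∑ c, lz c := by
          apply Finset.sum_le_sum
          intro c _
          have e1 : ∑ a, lx (a, c) = lz c := by
            have := sum_law_mul P (fun w => (X w, Z w)) (fun t => if t.2 = c then 1 else 0)
            rw [Fintype.sum_prod_type] at this
            simpa [law, hlx, hlz] using this
          have e2 : ∑ a, ly (a, c) = lz c := by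
            have := sum_law_mul P (fun w => (Y w, Z w)) (fun t => if t.2 = c then 1 else 0)
            rw [Fintype.sum_prod_type] at this
            simpa [law, hly, hlz] using this
          rw [e1, e2]
          by_cases h0 : lz c = 0
          · simp [h0]
          · apply le_of_eq; field_simp
      _ = 1 := (isPr_law hP Z).2
  have key2 : ∑ w, (P w * (lx (X w, Z w) * ly (Y w, Z w) / (l (X w, Y w, Z w) * lz (Z w))) - P w) ≤ 0 := by
    rw [Finset.sum_sub_distrib, hP.2]; linarith
  rw [← sub_nonpos, ← Finset.sum_sub_distrib]
  refine le_trans (Finset.sum_le_sum ?_) key2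
  intro w _
  rcases eq_or_lt_of_le (hP.1 w) with h0 | h0
  · simp [← h0]
  · have h1 : 0 < lx (X w, Z w) := lt_of_lt_of_le h0 (le_law hP (fun w => (X w, Z w)) w)
    have h2 : 0 < ly (Y w, Z w) := lt_of_lt_of_le h0 (le_law hP (fun w => (Y w, Z w)) w)
    have h3 : 0 < lz (Z w) := lt_of_lt_of_le h0 (le_law hP Z w)
    have h4 : 0 < l (X w, Y w, Z w) := lt_of_lt_of_le h0 (le_law hP (fun w => (X w, Y w, Z w)) w)
    have := log_le_sub_one_of_pos (show 0 < lx (X w, Z w) * ly (Y w, Z w) / (l (X w, Y w, Z w) * lz (Z w)) by positivity)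
    rw [log_div (by positivity) (by positivity), log_mul h1.ne' h2.ne', log_mul h4.ne' h3.ne'] at this
    nlinarith

lemma H_unit {P : Ω → ℝ} (hP : IsPr P) : H P (fun _ => ()) = 0 := by
  simp [H, E, law, hP.2]

lemma subadd {P : Ω → ℝ} (hP : IsPr P) (X : Ω → A) (Y : Ω → B) :
    H P (fun w => (X w, Y w)) ≤ H P X + H P Y := by
  have h := submod hP X Y (fun _ => ())
  rw [H_unit hP, H_congr hP (fun w => (X w, Y w, ())) (fun w => (X w, Y w)) (by simp),
    H_congr hP (fun w => (X w, ())) X (by simp), H_congr hP (fun w => (Y w, ())) Y (by simp)] at h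
  linarith

/-- product weights -/
def pr (P : Ω → ℝ) (Q : Ω' → ℝ) : Ω × Ω' → ℝ := fun z => P z.1 * Q z.2

lemma isPr_pr {P : Ω → ℝ} {Q : Ω' → ℝ} (hP : IsPr P) (hQ : IsPr Q) : IsPr (pr P Q) := by
  refine ⟨fun z => mul_nonneg (hP.1 _) (hQ.1 _), ?_⟩
  simp only [pr, Fintype.sum_prod_type, ← Finset.mul_sum, hQ.2, mul_one, hP.2]

lemma law_pr (P : Ω → ℝ) (Q : Ω' → ℝ) (X : Ω → A) (Y : Ω' → B) :
    law (pr P Q) (fun z => (X z.1, Y z.2)) = pr (law P X) (law Q Y) := by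
  funext t
  simp only [law, pr, Fintype.sum_prod_type, Finset.sum_mul_sum]
  refine Finset.sum_congr rfl fun a _ => Finset.sum_congr rfl fun b _ => ?_
  by_cases h1 : X a = t.1 <;> by_cases h2 : Y b = t.2 <;> simp [Prod.ext_iff, h1, h2]

lemma E_pr {p : A → ℝ} {q : B → ℝ} (hp : IsPr p) (hq : IsPr q) : E (pr p q) = E p + E q := by
  simp only [E, pr, Fintype.sum_prod_type, negMulLog_mul, Finset.sum_add_distrib]
  simp only [← Finset.sum_mul, ← Finset.mul_sum, hp.2, hq.2]
  ring

lemma H_pr {P : Ω → ℝ} {Q : Ω' → ℝ} (hP : IsPr P) (hQ : IsPr Q) (X : Ω → A) (Y : Ω' → B) :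
    H (pr P Q) (fun z => (X z.1, Y z.2)) = H P X + H Q Y := by
  rw [H, law_pr, E_pr (isPr_law hP X) (isPr_law hQ Y)]; rfl

lemma law_fst (P : Ω → ℝ) {Q : Ω' → ℝ} (hQ : IsPr Q) (X : Ω → A) :
    law (pr P Q) (fun z => X z.1) = law P X := by
  funext a
  simp only [law, pr, Fintype.sum_prod_type]
  refine Finset.sum_congr rfl fun w _ => ?_
  by_cases h : X w = a <;> simp [h, ← Finset.mul_sum, hQ.2]

lemma law_snd {P : Ω → ℝ} (hP : IsPr P) (Q : Ω' → ℝ) (Y : Ω' → A) :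
    law (pr P Q) (fun z => Y z.2) = law Q Y := by
  funext a
  simp only [law, pr, Fintype.sum_prod_type_right]
  refine Finset.sum_congr rfl fun w _ => ?_
  by_cases h : Y w = a <;> simp [h, ← Finset.sum_mul, hP.2]

lemma H_fst (P : Ω → ℝ) {Q : Ω' → ℝ} (hQ : IsPr Q) (X : Ω → A) :
    H (pr P Q) (fun z => X z.1) = H P X := by rw [H, law_fst P hQ]; rfl

lemma H_snd {P : Ω → ℝ} (hP : IsPr P) (Q : Ω' → ℝ) (Y : Ω' → A) :
    H (pr P Q) (fun z => Y z.2) = H Q Y := by rw [H, law_snd hP Q]; rfl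

lemma H_equiv (e : Ω' ≃ Ω) (P : Ω → ℝ) (P' : Ω' → ℝ) (h : ∀ w, P' w = P (e w)) (X : Ω → A) :
    H P' (fun w => X (e w)) = H P X := by
  have : law P' (fun w => X (e w)) = law P X := by
    funext a
    simp only [law, h]
    exact Equiv.sum_comp e (fun w => if X w = a then P w else 0)
  rw [H, this]; rfl

/-- generic chain rule -/
lemma chain_gen (P : Ω → ℝ) (X : Ω → A) (U : Ω → B) (c : B → ℝ) (m : B → A → ℝ)
    (hm : ∀ u, ∑ a, m u a = 1) (h : ∀ a u, law P (fun w => (X w, U w)) (a, u) = c u * m u a) :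
    H P (fun w => (X w, U w)) = E c + ∑ u, c u * E (m u) := by
  simp only [H, E, Fintype.sum_prod_type_right, h, negMulLog_mul, Finset.sum_add_distrib,
    ← Finset.sum_mul, hm, one_mul, Finset.mul_sum]

/-- conditioned weights -/
def cnd (P : Ω → ℝ) (U : Ω → B) (u : B) : Ω → ℝ := fun w =>
  if law P U u = 0 then P w else if U w = u then P w / law P U u else 0

lemma isPr_cnd {P : Ω → ℝ} (hP : IsPr P) (U : Ω → B) (u : B) : IsPr (cnd P U u) := by
  unfold cnd
  by_cases h : law P U u = 0
  · simpa [h] using hP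
  · simp only [h, if_false]
    constructor
    · intro w
      show 0 ≤ if U w = u then P w / law P U u else 0
      split_ifs
      · exact div_nonneg (hP.1 w) (law_nonneg hP U u)
      · exact le_rfl
    · have : ∀ w, (if U w = u then P w / law P U u else 0) =
        (if U w = u then P w else 0) / law P U u := by intro w; split_ifs <;> simp
      simp only [this, ← Finset.sum_div]
      exact div_self h

lemma law_mul_cnd {P : Ω → ℝ} (hP : IsPr P) (U : Ω → B) (u : B) (w : Ω) :
    law P U u * cnd P U u w = if U w = u then P w else 0 := by
  unfold cnd
  by_cases h : law P U u = 0
  · simp only [h, zero_mul]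
    split_ifs with h1
    · have := le_law hP U w
      rw [h1, h] at this
      exact le_antisymm (hP.1 w) this
    · rfl
  · simp only [h, if_false]
    split_ifs
    · field_simp
    · simp

/-- conditional law -/
def cl (P : Ω → ℝ) (X : Ω → A) (U : Ω → B) (u : B) : A → ℝ := law (cnd P U u) X

lemma isPr_cl {P : Ω → ℝ} (hP : IsPr P) (X : Ω → A) (U : Ω → B) (u : B) : IsPr (cl P X U u) :=
  isPr_law (isPr_cnd hP U u) X

lemma law_pair_cl {P : Ω → ℝ} (hP : IsPr P) (X : Ω → A) (U : Ω → B) (a : A) (u : B) :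
    law P (fun w => (X w, U w)) (a, u) = law P U u * cl P X U u a := by
  unfold cl
  show _ = law P U u * ∑ w, (if X w = a then cnd P U u w else 0)
  rw [Finset.mul_sum]
  rw [law]
  refine Finset.sum_congr rfl fun w _ => ?_
  rw [mul_ite, law_mul_cnd hP]
  by_cases h1 : X w = a <;> by_cases h2 : U w = u <;> simp [h1, h2]

lemma chain1 {P : Ω → ℝ} (hP : IsPr P) (X : Ω → A) (U : Ω → B) :
    ∑ u, law P U u * E (cl P X U u) = H P (fun w => (X w, U w)) - H P U := by
  rw [chain_gen P X U (law P U) (cl P X U) (fun u => (isPr_cl hP X U u).2) (law_pair_cl hP X U)]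
  simp [H]

lemma cl_comp (P : Ω → ℝ) (X : Ω → A) (U : Ω → B) (u : B) (f : A → C) :
    law (cl P X U u) f = cl P (fun w => f (X w)) U u := by
  unfold cl; rw [law_law]

end basic

section group
variable {Ω Ω' B C G : Type*} [Fintype Ω] [Fintype Ω'] [Fintype B] [Fintype C]
  [AddCommGroup G] [Fintype G]

/-- entropy of an independent sum -/
def hs (p q : G → ℝ) : ℝ := H (pr p q) (fun z => z.1 + z.2)

lemma hs_law (P : Ω → ℝ) (Q : Ω' → ℝ) (X : Ω → G) (Y : Ω' → G) :
    hs (law P X) (law Q Y) = H (pr P Q) (fun z => X z.1 + Y z.2) := by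
  unfold hs
  rw [← law_pr, H_law]

lemma hs_comm (p q : G → ℝ) : hs p q = hs q p := by
  unfold hs
  rw [← H_equiv (Equiv.prodComm G G) (pr q p) (pr p q) (fun w => by simp [pr, mul_comm])]
  simp [add_comm]

lemma chain2 {P : Ω → ℝ} {Q : Ω' → ℝ} (hP : IsPr P) (hQ : IsPr Q) (X : Ω → G) (U : Ω → B)
    (Y : Ω' → G) (W : Ω' → C) :
    ∑ u, ∑ w, law P U u * law Q W w * hs (cl P X U u) (cl Q Y W w) =
      H (pr P Q) (fun z => (X z.1 + Y z.2, (U z.1, W z.2))) - H P U - H Q W := by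
  have h := chain_gen (pr P Q) (fun z => X z.1 + Y z.2) (fun z => (U z.1, W z.2))
    (pr (law P U) (law Q W))
    (fun t => law (pr (cnd P U t.1) (cnd Q W t.2)) (fun z => X z.1 + Y z.2))
    (fun t => (isPr_law (isPr_pr (isPr_cnd hP _ _) (isPr_cnd hQ _ _)) _).2)
    (by
      rintro a ⟨u, w⟩
      show _ = law P U u * law Q W w * law (pr (cnd P U u) (cnd Q W w)) (fun z => X z.1 + Y z.2) a
      rw [law_def (pr P Q), law_def (pr (cnd P U u) (cnd Q W w))]
      rw [Finset.mul_sum]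
      refine Finset.sum_congr rfl fun z _ => ?_
      have e1 := law_mul_cnd hP U u z.1
      have e2 := law_mul_cnd hQ W w z.2
      by_cases h : X z.1 + Y z.2 = a
      · simp only [h, if_true, pr]
        have : law P U u * law Q W w * (cnd P U u z.1 * cnd Q W w z.2) =
          (law P U u * cnd P U u z.1) * (law Q W w * cnd Q W w z.2) := by ring
        rw [this, e1, e2]
        by_cases h1 : U z.1 = u <;> by_cases h2 : W z.2 = w <;> simp [h1, h2]
      · simp [h])
  rw [h, E_pr (isPr_law hP U) (isPr_law hQ W), Fintype.sum_prod_type]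
  simp only [cl, hs_law, H, pr]
  ring

end group

section quot
variable {G G' : Type} [AddCommGroup G] [Module (ZMod 2) G] [Fintype G]
  [AddCommGroup G'] [Module (ZMod 2) G'] [Fintype G']

def cv (p q : G → ℝ) : G → ℝ := law (pr p q) (fun z => z.1 + z.2)

lemma hs_eq (p q : G → ℝ) : hs p q = E (cv p q) := rfl

lemma isPr_cv {p q : G → ℝ} (hp : IsPr p) (hq : IsPr q) : IsPr (cv p q) :=
  isPr_law (isPr_pr hp hq) _

/-- quotient law -/
def qt (V : Submodule (ZMod 2) G) (p : G → ℝ) : G ⧸ V → ℝ := law p V.mkQ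

lemma isPr_qt {p : G → ℝ} (hp : IsPr p) (V : Submodule (ZMod 2) G) : IsPr (qt V p) := isPr_law hp _

lemma E_law_le {p : G → ℝ} (hp : IsPr p) {A : Type*} [Fintype A] (f : G → A) :
    E (law p f) ≤ E p := by
  rw [← H_id p, E_law]
  exact H_le hp _ _ (fun w v h => by rw [h])

lemma E_qt_le {p : G → ℝ} (hp : IsPr p) (V : Submodule (ZMod 2) G) : E (qt V p) ≤ E p :=
  E_law_le hp _

lemma qt_cv (V : Submodule (ZMod 2) G) (p q : G → ℝ) : qt V (cv p q) = cv (qt V p) (qt V q) := by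
  unfold qt cv
  rw [law_law, ← law_pr, law_law]
  simp only [map_add]

lemma hs_le {p q : G → ℝ} (hp : IsPr p) (hq : IsPr q) : hs p q ≤ E p + E q := by
  rw [← E_pr hp hq, hs]
  rw [← H_id (pr p q)]
  exact H_le (isPr_pr hp hq) _ _ (fun w v h => by rw [h])

lemma le_hs_right {p q : G → ℝ} (hp : IsPr p) (hq : IsPr q) : E q ≤ hs p q := by
  have h := subadd (isPr_pr hp hq) (fun z => z.1 + z.2) (fun z => z.1)
  rw [H_congr (isPr_pr hp hq) _ (fun z => z) (by
    rintro ⟨a, b⟩ ⟨c, d⟩; simp only [Prod.mk.injEq]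
    constructor
    · rintro ⟨h1, h2⟩; subst h2; exact ⟨rfl, by simpa using h1⟩
    · rintro ⟨rfl, rfl⟩; exact ⟨rfl, rfl⟩), H_id, E_pr hp hq,
    H_fst p hq (fun x => x), H_id] at h
  unfold hs
  linarith

lemma le_hs_left {p q : G → ℝ} (hp : IsPr p) (hq : IsPr q) : E p ≤ hs p q := by
  rw [hs_comm]; exact le_hs_right hq hp

lemma lemQ {p q : G → ℝ} (hp : IsPr p) (hq : IsPr q) (V : Submodule (ZMod 2) G) :
    E q + hs (qt V p) (qt V q) ≤ E (qt V q) + hs p q := by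
  have hP := isPr_pr hp hq
  have h := submod hP (fun z => z.1) (fun z => z.1 + z.2) (fun z => V.mkQ (z.1 + z.2))
  rw [H_congr hP (fun w => (w.1, w.1 + w.2, V.mkQ (w.1 + w.2))) (fun z => z) (by
    rintro ⟨a, b⟩ ⟨c, d⟩; simp only [Prod.mk.injEq]
    constructor
    · rintro ⟨h1, h2, _⟩; subst h1; exact ⟨rfl, by simpa using h2⟩
    · rintro ⟨rfl, rfl⟩; exact ⟨rfl, rfl, rfl⟩), H_id, E_pr hp hq,
    H_congr hP (fun w => (w.1 + w.2, V.mkQ (w.1 + w.2))) (fun z => z.1 + z.2) (by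
      intro w v; simp only [Prod.mk.injEq]
      exact ⟨fun h => h.1, fun h => ⟨h, by rw [h]⟩⟩),
    H_congr hP (fun w => (w.1, V.mkQ (w.1 + w.2))) (fun z => ((fun x => x) z.1, V.mkQ z.2)) (by
      rintro ⟨a, b⟩ ⟨c, d⟩; simp only [Prod.mk.injEq, map_add]
      constructor
      · rintro ⟨h1, h2⟩; subst h1; exact ⟨rfl, by simpa using h2⟩
      · rintro ⟨rfl, h⟩; exact ⟨rfl, by rw [h]⟩),
    H_pr hp hq (fun x => x) V.mkQ, H_id] at h
  have e : hs (qt V p) (qt V q) = H (pr p q) (fun z => V.mkQ (z.1 + z.2)) := by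
    unfold qt; rw [hs_law]; simp only [map_add]
  rw [e]
  have e2 : E (qt V q) = H q V.mkQ := rfl
  rw [e2]
  unfold hs
  linarith

/-- log size of a subspace -/
def ell (V : Submodule (ZMod 2) G) : ℝ := log (Nat.card V)

lemma ell_nonneg (V : Submodule (ZMod 2) G) : 0 ≤ ell V := log_natCast_nonneg _

lemma ell_bot : ell (⊥ : Submodule (ZMod 2) G) = 0 := by simp [ell]

/-- robustness -/
def rob (β : ℝ) (p : G → ℝ) : Prop := ∀ V : Submodule (ZMod 2) G, E p - E (qt V p) ≤ β * ell V

lemma ell_comap (V : Submodule (ZMod 2) G) (W : Submodule (ZMod 2) (G ⧸ V)) :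
    ell (W.comap V.mkQ) = ell V + ell W := by
  have h1 := Submodule.card_eq_card_quotient_mul_card V
  have h2 := Submodule.card_eq_card_quotient_mul_card W
  have h3 := Submodule.card_eq_card_quotient_mul_card (W.comap V.mkQ)
  have hker : LinearMap.ker (W.mkQ ∘ₗ V.mkQ) = W.comap V.mkQ := by
    rw [LinearMap.ker_comp, Submodule.ker_mkQ]
  have h4 : Nat.card (G ⧸ (W.comap V.mkQ)) = Nat.card ((G ⧸ V) ⧸ W) := by
    rw [← hker]
    exact Nat.card_congr (LinearMap.quotKerEquivOfSurjective (W.mkQ ∘ₗ V.mkQ)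
      ((W.mkQ_surjective).comp V.mkQ_surjective)).toEquiv
  have hp : 0 < Nat.card ((G ⧸ V) ⧸ W) := Nat.card_pos
  have : Nat.card (W.comap V.mkQ) = Nat.card V * Nat.card W := by
    rw [h2] at h1
    rw [h4, h1] at h3
    apply Nat.eq_of_mul_eq_mul_right hp
    nlinarith
  unfold ell
  rw [this, Nat.cast_mul, log_mul]
  · exact_mod_cast (Nat.card_pos (α := V)).ne'
  · exact_mod_cast (Nat.card_pos (α := W)).ne'

lemma E_qt_qt {p : G → ℝ} (hp : IsPr p) (V : Submodule (ZMod 2) G) (W : Submodule (ZMod 2) (G ⧸ V)) :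
    E (qt W (qt V p)) = E (qt (W.comap V.mkQ) p) := by
  unfold qt
  rw [law_law]
  apply H_congr hp
  intro w v
  simp only [Submodule.mkQ_apply, Submodule.Quotient.eq, Submodule.mem_comap, ← map_sub,
    ← Submodule.Quotient.mk_sub]

lemma argmin {ι : Type} [Fintype ι] (P : ι → G → ℝ) (hP : ∀ i, IsPr (P i)) {β : ℝ} (hβ : 0 ≤ β) :
    ∃ V : Submodule (ZMod 2) G, β * ell V ≤ ∑ i, E (P i) ∧ ∀ i, rob β (qt V (P i)) := by
  obtain ⟨V, hV⟩ := Finite.exists_min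
    (fun V : Submodule (ZMod 2) G => ∑ i, E (qt V (P i)) + β * ell V)
  refine ⟨V, ?_, ?_⟩
  · have h := hV ⊥
    rw [ell_bot, mul_zero, add_zero] at h
    have h1 : ∑ i, E (qt ⊥ (P i)) ≤ ∑ i, E (P i) := Finset.sum_le_sum fun i _ => E_qt_le (hP i) _
    have h2 : 0 ≤ ∑ i, E (qt V (P i)) := Finset.sum_nonneg fun i _ => E_nonneg (isPr_qt (hP i) V)
    linarith
  · intro i W
    have h := hV (W.comap V.mkQ)
    rw [ell_comap] at h
    have h1 : ∑ i, E (qt (W.comap V.mkQ) (P i)) = ∑ i, E (qt W (qt V (P i))) :=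
      Finset.sum_congr rfl fun i _ => (E_qt_qt (hP i) V W).symm
    rw [h1] at h
    have h2 : E (qt V (P i)) - E (qt W (qt V (P i))) ≤
        ∑ i, (E (qt V (P i)) - E (qt W (qt V (P i)))) :=
      Finset.single_le_sum (f := fun i => E (qt V (P i)) - E (qt W (qt V (P i))))
        (fun j _ => sub_nonneg.2 (E_qt_le (isPr_qt (hP j) V) W)) (Finset.mem_univ i)
    rw [Finset.sum_sub_distrib] at h2
    linarith

end quot

/-- inductive statement -/
def Bd (η L : ℝ) : Prop :=
  ∀ (G : Type) [AddCommGroup G] [Module (ZMod 2) G] [Fintype G] (p q : G → ℝ), IsPr p → IsPr q →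
    ∃ V : Submodule (ZMod 2) G, ell V ≤ L * (E p + E q) ∧
      E (qt V p) + E (qt V q) - hs (qt V p) (qt V q) ≤ η * (E (qt V p) + E (qt V q))

section quot2
variable {G : Type} [AddCommGroup G] [Module (ZMod 2) G] [Fintype G]

lemma lem1 {η L β : ℝ} (hB : Bd η L) (hη : 0 ≤ η) (hβ : 0 ≤ β) {p q : G → ℝ} (hp : IsPr p)
    (hq : IsPr q) (hr : rob β p) : E p + E q - hs p q ≤ (η + β * L) * (E p + E q) := by
  obtain ⟨V, h1, h2⟩ := hB G p q hp hq
  have h3 := lemQ hp hq V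
  have h4 := hr V
  have h5 := E_qt_le hp V
  have h6 := E_qt_le hq V
  have h7 := mul_le_mul_of_nonneg_left h1 hβ
  have h8 : η * (E (qt V p) + E (qt V q)) ≤ η * (E p + E q) := by gcongr
  linarith

lemma lem2 {W : Type} [Fintype W] {η L β β1 : ℝ} (hB : Bd η L) (hη : 0 ≤ η) (hL : 0 ≤ L)
    (hβ : 0 < β) (hβ1 : 0 ≤ β1) {p : G → ℝ} (hp : IsPr p) (Q : W → ℝ) (hQ : IsPr Q) (Y : W → G → ℝ)
    (hY : ∀ w, IsPr (Y w))
    (hrob : ∀ V : Submodule (ZMod 2) G, ∑ w, Q w * (E (Y w) - E (qt V (Y w))) ≤ β1 * ell V) :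
    ∑ w, Q w * (E p + E (Y w) - hs p (Y w)) ≤
      (η + β * L + β1 / β) * (E p + ∑ w, Q w * E (Y w)) := by
  obtain ⟨V, h1, h2⟩ := argmin (ι := Unit) (fun _ => p) (fun _ => hp) hβ.le
  simp only [Finset.univ_unique, Finset.sum_singleton] at h1
  have h2 := h2 ()
  have h3 := hrob V
  have hEp := E_nonneg hp
  have key : ∀ w, E p + E (Y w) - hs p (Y w) ≤
      (η + β * L) * (E p + E (Y w)) + (E (Y w) - E (qt V (Y w))) := by
    intro w
    have a1 := lemQ (hY w) hp V
    rw [hs_comm, hs_comm (Y w)] at a1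
    have a2 := lem1 hB hη hβ.le (isPr_qt hp V) (isPr_qt (hY w) V) h2
    have a3 : (η + β * L) * (E (qt V p) + E (qt V (Y w))) ≤ (η + β * L) * (E p + E (Y w)) := by
      have := E_qt_le hp V
      have := E_qt_le (hY w) V
      gcongr
    linarith
  have h4 : ell V ≤ E p / β := by rw [le_div_iff₀ hβ]; linarith
  have h5 : β1 * ell V ≤ β1 / β * E p := by
    have := mul_le_mul_of_nonneg_left h4 hβ1
    calc _ ≤ _ := this
      _ = _ := by ring
  have h6 : 0 ≤ ∑ w, Q w * E (Y w) := Finset.sum_nonneg fun w _ =>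
    mul_nonneg (hQ.1 w) (E_nonneg (hY w))
  have h7 : ∑ w, Q w * (E p + E (Y w) - hs p (Y w)) ≤
      ∑ w, (((η + β * L) * (Q w * E p + Q w * E (Y w))) + Q w * (E (Y w) - E (qt V (Y w)))) := by
    apply Finset.sum_le_sum
    intro w _
    have := mul_le_mul_of_nonneg_left (key w) (hQ.1 w)
    linarith
  rw [Finset.sum_add_distrib, ← Finset.mul_sum, Finset.sum_add_distrib, ← Finset.sum_mul, hQ.2,
    one_mul] at h7
  have h8 : 0 ≤ β1 / β * ∑ w, Q w * E (Y w) := by positivity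
  linarith

lemma rob_cond {Ω W : Type} [Fintype Ω] [Fintype W] {P : Ω → ℝ} (hP : IsPr P) (Y : Ω → G) (U : Ω → W)
    {β : ℝ} (hr : rob β (law P Y)) (V : Submodule (ZMod 2) G) :
    ∑ w, law P U w * (E (cl P Y U w) - E (qt V (cl P Y U w))) ≤ β * ell V := by
  have h1 := chain1 hP Y U
  have h2 := chain1 hP (fun w => V.mkQ (Y w)) U
  have h3 := hr V
  have h4 : ∀ w, qt V (cl P Y U w) = cl P (fun w => V.mkQ (Y w)) U w := by
    intro w; unfold qt; rw [cl_comp]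
  have h5 : qt V (law P Y) = law P (fun w => V.mkQ (Y w)) := by unfold qt; rw [law_law]
  rw [h5, E_law, E_law] at h3
  simp only [h4, mul_sub, Finset.sum_sub_distrib]
  rw [h1, h2]
  have h6 := submod hP U Y (fun w => V.mkQ (Y w))
  rw [H_congr hP (fun w => (U w, Y w, V.mkQ (Y w))) (fun w => (Y w, U w)) (by
      intro w v; simp only [Prod.mk.injEq]
      exact ⟨fun h => ⟨h.2.1, h.1⟩, fun h => ⟨h.2, h.1, by rw [h.1]⟩⟩),
    H_congr hP (fun w => (Y w, V.mkQ (Y w))) Y (by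
      intro w v; simp only [Prod.mk.injEq]
      exact ⟨fun h => h.1, fun h => ⟨h, by rw [h]⟩⟩),
    H_congr hP (fun w => (U w, V.mkQ (Y w))) (fun w => (V.mkQ (Y w), U w)) (by
      intro w v; simp only [Prod.mk.injEq]; exact And.comm)] at h6
  linarith

end quot2

section coupling
variable {Ω T A : Type} [Fintype Ω] [Fintype T] [Fintype A]

/-- conditionally independent coupling -/
def cpl (P : Ω → ℝ) (C : Ω → T) : T × (Ω × Ω) → ℝ := fun z =>
  law P C z.1 * pr (cnd P C z.1) (cnd P C z.1) z.2

lemma sum_cpl (P : Ω → ℝ) (C : Ω → T) (g : T × (Ω × Ω) → ℝ) :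
    ∑ z, (cpl P C z) * g z =
      ∑ c, law P C c * ∑ w, pr (cnd P C c) (cnd P C c) w * g (c, w) := by
  rw [Fintype.sum_prod_type]
  refine Finset.sum_congr rfl fun c _ => ?_
  rw [Finset.mul_sum]
  refine Finset.sum_congr rfl fun w _ => ?_
  simp only [cpl]; ring

lemma isPr_cpl {P : Ω → ℝ} (hP : IsPr P) (C : Ω → T) : IsPr (cpl P C) := by
  have h : ∀ c, IsPr (pr (cnd P C c) (cnd P C c)) := fun c =>
    isPr_pr (isPr_cnd hP C c) (isPr_cnd hP C c)
  constructor
  · intro z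
    exact mul_nonneg (law_nonneg hP C _) ((h z.1).1 _)
  · have := sum_cpl P C (fun _ => 1)
    simp only [mul_one, (h _).2, (isPr_law hP C).2] at this
    exact this

lemma cpl_supp {P : Ω → ℝ} (hP : IsPr P) (C : Ω → T) (z : T × (Ω × Ω)) (hz : cpl P C z ≠ 0) :
    C z.2.1 = z.1 ∧ C z.2.2 = z.1 := by
  have e1 := law_mul_cnd hP C z.1 z.2.1
  have e2 := law_mul_cnd hP C z.1 z.2.2
  have e3 : cpl P C z = (law P C z.1 * cnd P C z.1 z.2.1) * cnd P C z.1 z.2.2 := by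
    simp only [cpl, pr]; ring
  have e4 : cpl P C z = (law P C z.1 * cnd P C z.1 z.2.2) * cnd P C z.1 z.2.1 := by
    simp only [cpl, pr]; ring
  constructor
  · by_contra h
    rw [if_neg h] at e1
    rw [e3, e1, zero_mul] at hz
    exact hz rfl
  · by_contra h
    rw [if_neg h] at e2
    rw [e4, e2, zero_mul] at hz
    exact hz rfl

lemma law_cpl_fst {P : Ω → ℝ} (hP : IsPr P) (C : Ω → T) (f : Ω → A) :
    law (cpl P C) (fun z => f z.2.1) = law P f := by
  funext a
  have h1 := sum_cpl P C (fun z => if f z.2.1 = a then 1 else 0)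
  have h2 : law (cpl P C) (fun z => f z.2.1) a =
      ∑ z, cpl P C z * (if f z.2.1 = a then 1 else 0) := by
    rw [law_def]; refine Finset.sum_congr rfl fun z _ => ?_; simp
  rw [h2, h1, law_def]
  have h3 : ∀ c, ∑ w, pr (cnd P C c) (cnd P C c) w * (if f w.1 = a then (1 : ℝ) else 0) =
      ∑ w, cnd P C c w * (if f w = a then 1 else 0) := by
    intro c
    rw [Fintype.sum_prod_type]
    refine Finset.sum_congr rfl fun w _ => ?_
    simp only [pr]
    have := (isPr_cnd hP C c).2
    by_cases h : f w = a
    · simp [h, ← Finset.mul_sum, this]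
    · simp [h]
  simp only [h3, Finset.mul_sum]
  rw [Finset.sum_comm]
  refine Finset.sum_congr rfl fun w _ => ?_
  simp only [← mul_assoc, law_mul_cnd hP, ← Finset.sum_mul]
  simp

lemma law_cpl_snd {P : Ω → ℝ} (hP : IsPr P) (C : Ω → T) (f : Ω → A) :
    law (cpl P C) (fun z => f z.2.2) = law P f := by
  rw [← law_cpl_fst hP C f]
  funext a
  simp only [law_def]
  rw [Fintype.sum_prod_type, Fintype.sum_prod_type]
  refine Finset.sum_congr rfl fun c _ => ?_
  rw [← Equiv.sum_comp (Equiv.prodComm Ω Ω)]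
  refine Finset.sum_congr rfl fun w _ => ?_
  simp [cpl, pr, mul_comm, mul_left_comm]

lemma chain_cpl {P : Ω → ℝ} (hP : IsPr P) (C : Ω → T) (X : Ω × Ω → A) :
    H (cpl P C) (fun z => (X z.2, z.1)) =
      H P C + ∑ c, law P C c * H (pr (cnd P C c) (cnd P C c)) X := by
  refine chain_gen (cpl P C) (fun z => X z.2) (fun z => z.1) (law P C)
    (fun c => law (pr (cnd P C c) (cnd P C c)) X)
    (fun c => (isPr_law (isPr_pr (isPr_cnd hP C c) (isPr_cnd hP C c)) X).2) ?_
  intro a c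
  have h1 := sum_cpl P C (fun z => if (X z.2, z.1) = (a, c) then 1 else 0)
  have h2 : law (cpl P C) (fun z => (X z.2, z.1)) (a, c) =
      ∑ z, cpl P C z * (if (X z.2, z.1) = (a, c) then 1 else 0) := by
    rw [law_def]; refine Finset.sum_congr rfl fun z _ => ?_; simp
  rw [h2, h1, Finset.sum_eq_single c]
  · congr 1
    rw [law_def]; refine Finset.sum_congr rfl fun z _ => ?_; simp
  · intro b _ hb
    simp [hb]
  · simp

end coupling

section bsg
variable {G : Type} [AddCommGroup G] [Module (ZMod 2) G] [Fintype G]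
variable {Ω T : Type} [Fintype Ω] [Fintype T]

lemma bsg {P : Ω → ℝ} (hP : IsPr P) (A B : Ω → G) (S : Ω → T) :
    ∑ c, law P (fun w => (A w + B w, S w)) c * hs (cl P A (fun w => (A w + B w, S w)) c)
      (cl P B (fun w => (A w + B w, S w)) c) ≤
    2 * (H P (fun w => (A w, S w)) + H P (fun w => (B w, S w)) - H P S)
      - 2 * H P (fun w => (A w, B w, S w)) + H P (fun w => (A w + B w, S w)) - H P S := by
  set C : Ω → G × T := fun w => (A w + B w, S w) with hC
  have hR := isPr_cpl hP C
  have h1 := chain_cpl hP C (fun z => A z.1 + B z.2)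
  have h1' : ∀ c, hs (cl P A C c) (cl P B C c) =
      H (pr (cnd P C c) (cnd P C c)) (fun z => A z.1 + B z.2) := by
    intro c; unfold cl; rw [hs_law]
  simp only [h1']
  set Sg := ∑ c, law P C c * H (pr (cnd P C c) (cnd P C c)) (fun z => A z.1 + B z.2)
  have hsupp := cpl_supp hP C
  have hZ1 : ∀ z, cpl P C z ≠ 0 → A z.2.1 + B z.2.1 = z.1.1 := fun z hz =>
    congrArg Prod.fst (hsupp z hz).1
  have hZ2 : ∀ z, cpl P C z ≠ 0 → A z.2.2 + B z.2.2 = z.1.1 := fun z hz =>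
    congrArg Prod.fst (hsupp z hz).2
  have hS1 : ∀ z, cpl P C z ≠ 0 → S z.2.1 = z.1.2 := fun z hz =>
    congrArg Prod.snd (hsupp z hz).1
  have hS2 : ∀ z, cpl P C z ≠ 0 → S z.2.2 = z.1.2 := fun z hz =>
    congrArg Prod.snd (hsupp z hz).2
  -- the second chain
  have h2 := chain_cpl hP C (fun z => ((A z.1, B z.1, S z.1), (A z.2, B z.2, S z.2)))
  have h2' : ∀ c, H (pr (cnd P C c) (cnd P C c))
      (fun z => ((A z.1, B z.1, S z.1), (A z.2, B z.2, S z.2))) =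
      2 * E (cl P (fun w => (A w, B w, S w)) C c) := by
    intro c
    rw [H_pr (isPr_cnd hP C c) (isPr_cnd hP C c) (fun w => (A w, B w, S w))
      (fun w => (A w, B w, S w))]
    show _ = 2 * H (cnd P C c) (fun w => (A w, B w, S w))
    ring
  simp only [h2'] at h2
  have h3 := chain1 hP (fun w => (A w, B w, S w)) C
  have h4 : H P (fun w => ((A w, B w, S w), C w)) = H P (fun w => (A w, B w, S w)) := by
    apply H_congr hP
    intro w v
    simp only [hC, Prod.mk.injEq]
    constructor
    · rintro ⟨h, _⟩; exact h
    · rintro ⟨a, b, c⟩; exact ⟨⟨a, b, c⟩, by rw [a, b], c⟩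
  rw [h4] at h3
  have h5 : ∑ c, law P C c * (2 * E (cl P (fun w => (A w, B w, S w)) C c)) =
      2 * ∑ c, law P C c * E (cl P (fun w => (A w, B w, S w)) C c) := by
    rw [Finset.mul_sum]; refine Finset.sum_congr rfl fun c _ => ?_; ring
  rw [h5, h3] at h2
  -- entropies in the coupling
  have k1 := submod hR (fun z => A z.2.1 + B z.2.2) (fun z => z.1.1) (fun z => z.1.2)
  have kS : H (cpl P C) (fun z => z.1.2) = H P S := by
    rw [← E_law P S, ← law_cpl_fst hP C S]
    exact le_antisymm
      (H_le_of_det hR _ _ fun w v hw hv h => by rw [← hS1 w hw, ← hS1 v hv]; exact h)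
      (H_le_of_det hR _ _ fun w v hw hv h => by rw [hS1 w hw, hS1 v hv]; exact h)
  have kC : H (cpl P C) (fun z => (z.1.1, z.1.2)) = H P C := by
    rw [← E_law P C, ← law_cpl_fst hP C C]
    exact le_antisymm
      (H_le_of_det hR _ _ fun w v hw hv h => by
        have h : C w.2.1 = C v.2.1 := h
        rw [(hsupp w hw).1, (hsupp v hv).1] at h; exact h)
      (H_le_of_det hR _ _ fun w v hw hv h => by
        have h : w.1 = v.1 := h
        rw [(hsupp w hw).1, (hsupp v hv).1]; exact h)
  rw [kS, kC] at k1
  have k1' : H (cpl P C) (fun z => (A z.2.1 + B z.2.2, z.1.1, z.1.2)) = H P C + Sg := h1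
  rw [k1'] at k1
  have k2 := submod hR (fun z => A z.2.1) (fun z => B z.2.1) (fun z => (A z.2.1 + B z.2.2, z.1.2))
  have kA1 : H (cpl P C) (fun z => (A z.2.1, z.1.2)) = H P (fun w => (A w, S w)) := by
    rw [← E_law P (fun w => (A w, S w)), ← law_cpl_fst hP C (fun w => (A w, S w))]
    exact le_antisymm
      (H_le_of_det hR _ _ fun w v hw hv h => by rw [← hS1 w hw, ← hS1 v hv]; exact h)
      (H_le_of_det hR _ _ fun w v hw hv h => by rw [hS1 w hw, hS1 v hv]; exact h)
  have kB1 : H (cpl P C) (fun z => (B z.2.1, z.1.2)) = H P (fun w => (B w, S w)) := by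
    rw [← E_law P (fun w => (B w, S w)), ← law_cpl_fst hP C (fun w => (B w, S w))]
    exact le_antisymm
      (H_le_of_det hR _ _ fun w v hw hv h => by rw [← hS1 w hw, ← hS1 v hv]; exact h)
      (H_le_of_det hR _ _ fun w v hw hv h => by rw [hS1 w hw, hS1 v hv]; exact h)
  have kA2 : H (cpl P C) (fun z => (A z.2.2, z.1.2)) = H P (fun w => (A w, S w)) := by
    rw [← E_law P (fun w => (A w, S w)), ← law_cpl_snd hP C (fun w => (A w, S w))]
    exact le_antisymm
      (H_le_of_det hR _ _ fun w v hw hv h => by rw [← hS2 w hw, ← hS2 v hv]; exact h)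
      (H_le_of_det hR _ _ fun w v hw hv h => by rw [hS2 w hw, hS2 v hv]; exact h)
  have kB2 : H (cpl P C) (fun z => (B z.2.2, z.1.2)) = H P (fun w => (B w, S w)) := by
    rw [← E_law P (fun w => (B w, S w)), ← law_cpl_snd hP C (fun w => (B w, S w))]
    exact le_antisymm
      (H_le_of_det hR _ _ fun w v hw hv h => by rw [← hS2 w hw, ← hS2 v hv]; exact h)
      (H_le_of_det hR _ _ fun w v hw hv h => by rw [hS2 w hw, hS2 v hv]; exact h)
  have k3 := submod hR (fun z => A z.2.1) (fun z => B z.2.2) (fun z => z.1.2)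
  have k4 := submod hR (fun z => B z.2.1) (fun z => A z.2.2) (fun z => z.1.2)
  rw [kS, kA1, kB2] at k3
  rw [kS, kB1, kA2] at k4
  have k5 : H (cpl P C) (fun z => (A z.2.1, A z.2.1 + B z.2.2, z.1.2)) ≤
      H (cpl P C) (fun z => (A z.2.1, B z.2.2, z.1.2)) := by
    apply H_le hR
    intro w v
    simp only [Prod.mk.injEq]
    rintro ⟨a, b, c⟩
    exact ⟨a, by rw [a, b], c⟩
  have k6 : H (cpl P C) (fun z => (B z.2.1, A z.2.1 + B z.2.2, z.1.2)) ≤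
      H (cpl P C) (fun z => (B z.2.1, A z.2.2, z.1.2)) := by
    apply H_le_of_det hR
    intro w v hw hv
    simp only [Prod.mk.injEq]
    rintro ⟨a, b, c⟩
    refine ⟨a, ?_, c⟩
    have e1 := (hZ1 w hw).trans (hZ2 w hw).symm
    have e2 := (hZ1 v hv).trans (hZ2 v hv).symm
    linear_combination (norm := (match_scalars <;> decide))
      (1 : ZMod 2) • e1 + (1 : ZMod 2) • e2 + (1 : ZMod 2) • a + (1 : ZMod 2) • b
  have k7 : H (cpl P C) (fun z => (((A z.2.1, B z.2.1, S z.2.1), (A z.2.2, B z.2.2, S z.2.2)), z.1)) ≤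
      H (cpl P C) (fun z => (A z.2.1, B z.2.1, A z.2.1 + B z.2.2, z.1.2)) := by
    apply H_le_of_det hR
    intro w v hw hv
    simp only [Prod.mk.injEq]
    rintro ⟨a, b, c, d⟩
    have e1 := hZ1 w hw
    have e2 := hZ1 v hv
    have e3 := hZ2 w hw
    have e4 := hZ2 v hv
    have hB : B w.2.2 = B v.2.2 := by rw [a] at c; exact add_left_cancel c
    have hz : w.1.1 = v.1.1 := by rw [← e1, ← e2, a, b]
    have hA : A w.2.2 = A v.2.2 := by
      rw [hz, ← e4, hB] at e3; exact add_right_cancel e3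
    exact ⟨⟨⟨a, b, by rw [hS1 w hw, hS1 v hv, d]⟩, ⟨hA, hB, by rw [hS2 w hw, hS2 v hv, d]⟩⟩,
      Prod.ext hz d⟩
  rw [h2] at k7
  linarith

end bsg

section four
variable {G : Type} [AddCommGroup G] [Module (ZMod 2) G] [Fintype G]

/-- four independent variables -/
def Pf (p q : G → ℝ) : (G × G) × (G × G) → ℝ := pr (pr p q) (pr p q)

/-- first sum -/
def fA (w : (G × G) × (G × G)) : G := w.1.1 + w.2.2
/-- second sum -/
def fB (w : (G × G) × (G × G)) : G := w.1.1 + w.1.2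
/-- total sum -/
def fS (w : (G × G) × (G × G)) : G := (w.1.1 + w.1.2) + (w.2.1 + w.2.2)

/-- joint entropy -/
def Jf (p q : G → ℝ) : ℝ := H (Pf p q) (fun w => (fA w, fB w, fS w))

lemma isPr_Pf {p q : G → ℝ} (hp : IsPr p) (hq : IsPr q) : IsPr (Pf p q) :=
  isPr_pr (isPr_pr hp hq) (isPr_pr hp hq)

variable {p q : G → ℝ}

lemma cv_comm (p q : G → ℝ) : cv p q = cv q p := by
  funext a
  unfold cv
  rw [law_def, law_def, ← Equiv.sum_comp (Equiv.prodComm G G)]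
  refine Finset.sum_congr rfl fun z _ => ?_
  simp [pr, mul_comm, add_comm]

lemma H_fS (p q : G → ℝ) : H (Pf p q) fS = hs (cv p q) (cv p q) := by
  unfold cv; rw [hs_law]; rfl

lemma H_fBS (hp : IsPr p) (hq : IsPr q) :
    H (Pf p q) (fun w => (fB w, fS w)) = 2 * hs p q := by
  have h := H_pr (isPr_pr hp hq) (isPr_pr hp hq) (fun z => z.1 + z.2) (fun z => z.1 + z.2)
  have e : H (Pf p q) (fun w => (fB w, fS w)) =
      H (pr (pr p q) (pr p q)) (fun z => (z.1.1 + z.1.2, z.2.1 + z.2.2)) := by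
    apply H_congr (isPr_Pf hp hq)
    intro w v
    simp only [fB, fS, Prod.mk.injEq]
    constructor
    · rintro ⟨a, b⟩; rw [a] at b; exact ⟨a, add_left_cancel b⟩
    · rintro ⟨a, b⟩; exact ⟨a, by rw [a, b]⟩
  rw [e, h]; unfold hs; ring

/-- swap the two q variables -/
def eY : (G × G) × (G × G) ≃ (G × G) × (G × G) where
  toFun w := ((w.1.1, w.2.2), (w.2.1, w.1.2))
  invFun w := ((w.1.1, w.2.2), (w.2.1, w.1.2))
  left_inv _ := rfl
  right_inv _ := rfl

/-- regroup -/
def eZ : (G × G) × (G × G) ≃ (G × G) × (G × G) where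
  toFun w := ((w.1.1, w.2.1), (w.1.2, w.2.2))
  invFun w := ((w.1.1, w.2.1), (w.1.2, w.2.2))
  left_inv _ := rfl
  right_inv _ := rfl

lemma H_fAS (hp : IsPr p) (hq : IsPr q) :
    H (Pf p q) (fun w => (fA w, fS w)) = 2 * hs p q := by
  rw [← H_fBS hp hq, ← H_equiv eY (Pf p q) (Pf p q) (fun w => by simp [Pf, pr, eY]; ring)
    (fun w => (fB w, fS w))]
  apply H_congr (isPr_Pf hp hq)
  intro w v
  simp only [fA, fB, fS, eY, Equiv.coe_fn_mk, Prod.mk.injEq]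
  apply and_congr Iff.rfl
  rw [show w.1.1 + w.1.2 + (w.2.1 + w.2.2) = w.1.1 + w.2.2 + (w.2.1 + w.1.2) by abel,
    show v.1.1 + v.1.2 + (v.2.1 + v.2.2) = v.1.1 + v.2.2 + (v.2.1 + v.1.2) by abel]

lemma H_fA (hp : IsPr p) (hq : IsPr q) : law (Pf p q) fA = cv p q := by
  have h := law_fst (pr p q) (isPr_pr hp hq) (fun z : G × G => z.1 + z.2)
  unfold cv
  rw [← h]
  funext a
  rw [law_def, law_def, ← Equiv.sum_comp eY]
  refine Finset.sum_congr rfl fun z _ => ?_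
  simp only [fA, eY, Equiv.coe_fn_mk, Pf, pr]
  congr 1; ring

lemma H_fB (hp : IsPr p) (hq : IsPr q) : law (Pf p q) fB = cv p q :=
  law_fst (pr p q) (isPr_pr hp hq) (fun z : G × G => z.1 + z.2)

lemma H_fZS (hp : IsPr p) (hq : IsPr q) :
    H (Pf p q) (fun w => (fA w + fB w, fS w)) = hs p p + hs q q := by
  have h := H_pr (isPr_pr hp hp) (isPr_pr hq hq) (fun z => z.1 + z.2) (fun z => z.1 + z.2)
  rw [← H_equiv eZ (pr (pr p p) (pr q q)) (Pf p q) (fun w => by simp [Pf, pr, eZ]; ring)] at h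
  show _ = H (pr p p) (fun z => z.1 + z.2) + H (pr q q) (fun z => z.1 + z.2)
  rw [← h]
  apply H_congr (isPr_Pf hp hq)
  intro w v
  simp only [fA, fB, fS, eZ, Equiv.coe_fn_mk, Prod.mk.injEq]
  have z1 := ZModModule.add_self w.1.1
  have z2 := ZModModule.add_self v.1.1
  constructor
  · rintro ⟨h1, h2⟩
    constructor
    · linear_combination (norm := (match_scalars <;> decide)) (1 : ZMod 2) • h1 + (1 : ZMod 2) • h2
    · linear_combination (norm := (match_scalars <;> decide)) (1 : ZMod 2) • h1
  · rintro ⟨h1, h2⟩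
    constructor
    · linear_combination (norm := (match_scalars <;> decide)) (1 : ZMod 2) • h2
    · linear_combination (norm := (match_scalars <;> decide)) (1 : ZMod 2) • h1 + (1 : ZMod 2) • h2

lemma H_fAZS (hp : IsPr p) (hq : IsPr q) :
    H (Pf p q) (fun w => (fA w, fA w + fB w, fS w)) = Jf p q := by
  apply H_congr (isPr_Pf hp hq)
  intro w v
  simp only [Prod.mk.injEq]
  constructor
  · rintro ⟨a, b, c⟩; rw [a] at b; exact ⟨a, add_left_cancel b, c⟩
  · rintro ⟨a, b, c⟩; exact ⟨a, by rw [a, b], c⟩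

lemma H_fBZS (hp : IsPr p) (hq : IsPr q) :
    H (Pf p q) (fun w => (fB w, fA w + fB w, fS w)) = Jf p q := by
  apply H_congr (isPr_Pf hp hq)
  intro w v
  simp only [Prod.mk.injEq]
  constructor
  · rintro ⟨a, b, c⟩; rw [a] at b; exact ⟨add_right_cancel b, a, c⟩
  · rintro ⟨a, b, c⟩; exact ⟨b, by rw [a, b], c⟩

lemma I1_nonneg (hp : IsPr p) (hq : IsPr q) :
    Jf p q + hs (cv p q) (cv p q) ≤ 4 * hs p q := by
  have h := submod (isPr_Pf hp hq) fA fB fS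
  rw [H_fS, H_fAS hp hq, H_fBS hp hq] at h
  unfold Jf; linarith

lemma I2_nonneg (hp : IsPr p) (hq : IsPr q) :
    Jf p q + hs (cv p q) (cv p q) ≤ 2 * hs p q + hs p p + hs q q := by
  have h := submod (isPr_Pf hp hq) fA (fun w => fA w + fB w) fS
  rw [H_fS, H_fAS hp hq, H_fZS hp hq, H_fAZS hp hq] at h
  linarith

lemma hs_cv_cv (hp : IsPr p) (hq : IsPr q) : hs (cv p p) (cv q q) = hs (cv p q) (cv p q) := by
  rw [← H_fS]
  unfold cv
  rw [hs_law, ← H_equiv eZ (pr (pr p p) (pr q q)) (Pf p q) (fun w => by simp [Pf, pr, eZ]; ring)]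
  apply H_congr (isPr_Pf hp hq)
  intro w v
  simp only [fS, eZ, Equiv.coe_fn_mk]
  rw [show w.1.1 + w.1.2 + (w.2.1 + w.2.2) = w.1.1 + w.2.1 + (w.1.2 + w.2.2) by abel,
    show v.1.1 + v.1.2 + (v.2.1 + v.2.2) = v.1.1 + v.2.1 + (v.1.2 + v.2.2) by abel]

lemma var1 (hp : IsPr p) (hq : IsPr q) :
    ∑ u, ∑ w, cv p q u * cv p q w * hs (cl (pr p q) Prod.fst (fun z => z.1 + z.2) u)
      (cl (pr p q) Prod.snd (fun z => z.1 + z.2) w) = Jf p q - 2 * hs p q := by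
  have h := chain2 (isPr_pr hp hq) (isPr_pr hp hq) (fun z : G × G => z.1) (fun z => z.1 + z.2)
    (fun z : G × G => z.2) (fun z => z.1 + z.2)
  have e : Jf p q = H (pr (pr p q) (pr p q))
      (fun z => (z.1.1 + z.2.2, (z.1.1 + z.1.2, z.2.1 + z.2.2))) := by
    apply H_congr (isPr_Pf hp hq)
    intro w v
    simp only [fA, fB, fS, Prod.mk.injEq]
    constructor
    · rintro ⟨a, b, c⟩; rw [b] at c; exact ⟨a, b, add_left_cancel c⟩
    · rintro ⟨a, b, c⟩; exact ⟨a, b, by rw [b, c]⟩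
  rw [e]
  refine Eq.trans h ?_
  unfold hs; ring

lemma var2 (hp : IsPr p) (hq : IsPr q) :
    ∑ u, ∑ w, cv p p u * cv q q w * hs (cl (pr p p) Prod.fst (fun z => z.1 + z.2) u)
      (cl (pr q q) Prod.fst (fun z => z.1 + z.2) w) = Jf p q - hs p p - hs q q := by
  have h := chain2 (isPr_pr hp hp) (isPr_pr hq hq) (fun z : G × G => z.1) (fun z => z.1 + z.2)
    (fun z : G × G => z.1) (fun z => z.1 + z.2)
  rw [← H_equiv eZ (pr (pr p p) (pr q q)) (Pf p q) (fun w => by simp [Pf, pr, eZ]; ring)] at h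
  have e : Jf p q = H (Pf p q)
      (fun w => ((eZ w).1.1 + (eZ w).2.1, ((eZ w).1.1 + (eZ w).1.2, (eZ w).2.1 + (eZ w).2.2))) := by
    apply H_congr (isPr_Pf hp hq)
    intro w v
    simp only [fA, fB, fS, eZ, Equiv.coe_fn_mk, Prod.mk.injEq]
    constructor
    · rintro ⟨a, b, c⟩
      refine ⟨b, ?_, ?_⟩
      · linear_combination (norm := (match_scalars <;> decide))
          (1 : ZMod 2) • a + (1 : ZMod 2) • b + (1 : ZMod 2) • c
      · linear_combination (norm := (match_scalars <;> decide))
          (1 : ZMod 2) • a + (1 : ZMod 2) • b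
    · rintro ⟨a, b, c⟩
      refine ⟨?_, a, ?_⟩
      · linear_combination (norm := (match_scalars <;> decide))
          (1 : ZMod 2) • a + (1 : ZMod 2) • c
      · linear_combination (norm := (match_scalars <;> decide))
          (1 : ZMod 2) • b + (1 : ZMod 2) • c
  rw [e]
  exact h

/-- the conditioning variable -/
def fC (w : (G × G) × (G × G)) : G × G := (fA w + fB w, fS w)

lemma bsg4 (hp : IsPr p) (hq : IsPr q) :
    ∑ c, law (Pf p q) fC c * hs (cl (Pf p q) fA fC c) (cl (Pf p q) fB fC c) ≤
      8 * hs p q - 3 * hs (cv p q) (cv p q) - 2 * Jf p q + hs p p + hs q q := by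
  have h := bsg (isPr_Pf hp hq) fA fB fS
  rw [H_fS, H_fAS hp hq, H_fBS hp hq, H_fZS hp hq] at h
  refine le_trans h ?_
  unfold Jf; linarith

lemma EA4 (hp : IsPr p) (hq : IsPr q) :
    ∑ c, law (Pf p q) fC c * E (cl (Pf p q) fA fC c) = Jf p q - hs p p - hs q q := by
  rw [chain1 (isPr_Pf hp hq)]
  unfold fC
  rw [H_fZS hp hq, H_fAZS hp hq]; ring

lemma EB4 (hp : IsPr p) (hq : IsPr q) :
    ∑ c, law (Pf p q) fC c * E (cl (Pf p q) fB fC c) = Jf p q - hs p p - hs q q := by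
  rw [chain1 (isPr_Pf hp hq)]
  unfold fC
  rw [H_fZS hp hq, H_fBZS hp hq]; ring

lemma EX (hp : IsPr p) (hq : IsPr q) :
    ∑ u, cv p q u * E (cl (pr p q) Prod.fst (fun z => z.1 + z.2) u) = E p + E q - hs p q := by
  have h := chain1 (isPr_pr hp hq) (Prod.fst : G × G → G) (fun z => z.1 + z.2)
  refine h.trans ?_
  rw [← E_pr hp hq, ← H_id (pr p q)]
  unfold hs
  congr 1
  apply H_congr (isPr_pr hp hq)
  rintro ⟨a, b⟩ ⟨c, d⟩
  simp only [Prod.mk.injEq]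
  constructor
  · rintro ⟨h1, h2⟩; rw [h1] at h2; exact ⟨h1, add_left_cancel h2⟩
  · rintro ⟨h1, h2⟩; exact ⟨h1, by rw [h1, h2]⟩

lemma EY (hp : IsPr p) (hq : IsPr q) :
    ∑ u, cv p q u * E (cl (pr p q) Prod.snd (fun z => z.1 + z.2) u) = E p + E q - hs p q := by
  have h := chain1 (isPr_pr hp hq) (Prod.snd : G × G → G) (fun z => z.1 + z.2)
  refine h.trans ?_
  rw [← E_pr hp hq, ← H_id (pr p q)]
  unfold hs
  congr 1
  apply H_congr (isPr_pr hp hq)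
  rintro ⟨a, b⟩ ⟨c, d⟩
  simp only [Prod.mk.injEq]
  constructor
  · rintro ⟨h1, h2⟩; rw [h1] at h2; exact ⟨add_right_cancel h2, h1⟩
  · rintro ⟨h1, h2⟩; exact ⟨h2, by rw [h1, h2]⟩

lemma law_fst' (hq : IsPr q) : law (pr p q) Prod.fst = p := by
  have := law_fst p hq (fun x : G => x)
  rw [law_id] at this; exact this

lemma law_snd' (hp : IsPr p) : law (pr p q) Prod.snd = q := by
  have := law_snd hp q (fun x : G => x)
  rw [law_id] at this; exact this

/-- Ruzsa triangle inequality -/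
lemma tri {p' : G → ℝ} (hp : IsPr p) (hp' : IsPr p') (hq : IsPr q) :
    hs p p' + E q ≤ hs p q + hs p' q := by
  have hP := isPr_pr (isPr_pr hp hp') hq
  have h := submod hP (fun z => z.1) (fun z => z.1.1 + z.2) (fun z => z.1.1 + z.1.2)
  rw [H_congr hP (fun z => (z.1, z.1.1 + z.2, z.1.1 + z.1.2)) (fun z => z) (by
      rintro ⟨a, b⟩ ⟨c, d⟩
      simp only [Prod.mk.injEq]
      constructor
      · rintro ⟨h1, h2, h3⟩; rw [h1] at h2; exact ⟨h1, add_left_cancel h2⟩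
      · rintro ⟨h1, h2⟩; exact ⟨h1, by rw [h1, h2], by rw [h1]⟩),
    H_congr hP (fun z => (z.1, z.1.1 + z.1.2)) (fun z => z.1) (by
      intro w v
      simp only [Prod.mk.injEq]
      exact ⟨fun h => h.1, fun h => ⟨h, by rw [h]⟩⟩),
    H_congr hP (fun z => (z.1.1 + z.2, z.1.1 + z.1.2)) (fun z => (z.1.1 + z.2, z.1.2 + z.2)) (by
      intro w v
      simp only [Prod.mk.injEq]
      constructor
      · rintro ⟨h1, h2⟩
        exact ⟨h1, by
          linear_combination (norm := (match_scalars <;> decide)) (1 : ZMod 2) • h1 + (1 : ZMod 2) • h2⟩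
      · rintro ⟨h1, h2⟩
        exact ⟨h1, by
          linear_combination (norm := (match_scalars <;> decide)) (1 : ZMod 2) • h1 + (1 : ZMod 2) • h2⟩),
    H_id, E_pr (isPr_pr hp hp') hq, H_fst (pr p p') hq (fun x => x), H_id,
    H_fst (pr p p') hq (fun z => z.1 + z.2)] at h
  have h2 := subadd hP (fun z => z.1.1 + z.2) (fun z => z.1.2 + z.2)
  have e1 : H (pr (pr p p') q) (fun z => z.1.1 + z.2) = hs p q := by
    rw [← hs_law (pr p p') q (fun z => z.1) (fun x => x), law_id]
    congr 1
    exact law_fst' hp'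
  have e2 : H (pr (pr p p') q) (fun z => z.1.2 + z.2) = hs p' q := by
    rw [← hs_law (pr p p') q (fun z => z.2) (fun x => x), law_id]
    congr 1
    exact law_snd' hp
  rw [e1, e2] at h2
  unfold hs at *
  linarith

/-- Kaimanovich–Vershik -/
lemma KV {p0 : G → ℝ} (hp0 : IsPr p0) (hp : IsPr p) (hq : IsPr q) :
    hs p0 (cv p q) + E p ≤ hs p0 p + hs p q := by
  have hP := isPr_pr hp0 (isPr_pr hp hq)
  have h := submod hP (fun z => z.1) (fun z => z.2.2) (fun z => z.1 + (z.2.1 + z.2.2))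
  rw [H_congr hP (fun z => (z.1, z.2.2, z.1 + (z.2.1 + z.2.2))) (fun z => z) (by
      rintro ⟨a, b, c⟩ ⟨a', b', c'⟩
      simp only [Prod.mk.injEq]
      constructor
      · rintro ⟨h1, h2, h3⟩; rw [h1, h2] at h3
        exact ⟨h1, add_right_cancel (add_left_cancel h3), h2⟩
      · rintro ⟨h1, h2, h3⟩; exact ⟨h1, h3, by rw [h1, h2, h3]⟩),
    H_congr hP (fun z => (z.1, z.1 + (z.2.1 + z.2.2)))
      (fun z => ((fun x => x) z.1, (fun y => y.1 + y.2) z.2)) (by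
      intro w v
      simp only [Prod.mk.injEq]
      constructor
      · rintro ⟨h1, h2⟩; rw [h1] at h2; exact ⟨h1, add_left_cancel h2⟩
      · rintro ⟨h1, h2⟩; exact ⟨h1, by rw [h1, h2]⟩),
    H_pr hp0 (isPr_pr hp hq) (fun x => x) (fun y => y.1 + y.2),
    H_id, H_id, E_pr hp0 (isPr_pr hp hq), E_pr hp hq] at h
  have e3 : H (pr p0 (pr p q)) (fun z => (z.2.2, z.1 + (z.2.1 + z.2.2))) ≤ E q + hs p0 p := by
    have h2 := subadd hP (fun z => z.2.2) (fun z => z.1 + z.2.1)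
    have e1 : H (pr p0 (pr p q)) (fun z => z.2.2) = E q := by
      have := H_snd hp0 (pr p q) (fun z => z.2)
      rw [this]
      show E (law (pr p q) Prod.snd) = E q
      rw [law_snd' hp]
    have e2 : H (pr p0 (pr p q)) (fun z => z.1 + z.2.1) = hs p0 p := by
      rw [← hs_law p0 (pr p q) (fun x => x) (fun z => z.1), law_id]
      congr 1
      exact law_fst' hq
    rw [e1, e2] at h2
    refine le_trans (H_le hP _ _ ?_) h2
    intro w v
    simp only [Prod.mk.injEq]
    rintro ⟨h1, h2⟩
    refine ⟨h1, ?_⟩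
    rw [← add_assoc, ← add_assoc, h2, h1]
  have e4 : hs p0 (cv p q) = H (pr p0 (pr p q)) (fun z => z.1 + (z.2.1 + z.2.2)) := by
    unfold cv
    rw [← hs_law p0 (pr p q) (fun x => x) (fun z => z.1 + z.2), law_id]
  rw [e4]
  unfold hs at *
  linarith

lemma cl_unit {P : G → ℝ} (hP : IsPr P) : cl P (fun x => x) (fun _ => ()) () = P := by
  have h : law P (fun _ => ()) () = 1 := by simp [law, hP.2]
  unfold cl
  rw [law_id]
  funext w
  simp [cnd, h]

lemma hs_cond {Ω T : Type} [Fintype Ω] [Fintype T] {P : Ω → ℝ} (hP : IsPr P) (Y : Ω → G) (W : Ω → T)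
    {p0 : G → ℝ} (hp0 : IsPr p0) :
    ∑ w, law P W w * hs p0 (cl P Y W w) ≤ hs p0 (law P Y) := by
  have h := chain2 hp0 hP (fun x => x) (fun _ => ()) Y W
  have h1 : law p0 (fun _ => ()) () = 1 := by simp [law, hp0.2]
  simp only [Finset.univ_unique, Finset.sum_singleton, PUnit.default_eq_unit, cl_unit hp0, h1,
    one_mul] at h
  rw [h, H_unit hp0]
  have h2 := subadd (isPr_pr hp0 hP) (fun z => z.1 + Y z.2) (fun z => ((), W z.2))
  have h3 : H (pr p0 P) (fun z => ((), W z.2)) = H P W := by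
    rw [← H_snd hp0 P W]
    apply H_congr (isPr_pr hp0 hP); simp
  have h4 : hs p0 (law P Y) = H (pr p0 P) (fun z => z.1 + Y z.2) := by
    rw [← hs_law p0 P (fun x => x) Y, law_id]
  rw [h4]
  linarith

lemma lem2c {Ω Ω' T T' : Type} [Fintype Ω] [Fintype Ω'] [Fintype T] [Fintype T']
    {η L β β1 : ℝ} (hB : Bd η L) (hη : 0 ≤ η) (hL : 0 ≤ L)
    (hβ : 0 < β) (hβ1 : 0 ≤ β1) {P : Ω → ℝ} {Q : Ω' → ℝ} (hP : IsPr P) (hQ : IsPr Q)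
    (X : Ω → G) (U : Ω → T) (Y : Ω' → G) (W : Ω' → T') (hr : rob β1 (law Q Y)) :
    ∑ u, law P U u * E (cl P X U u) + ∑ w, law Q W w * E (cl Q Y W w)
      - ∑ u, ∑ w, law P U u * law Q W w * hs (cl P X U u) (cl Q Y W w) ≤
      (η + β * L + β1 / β) *
        (∑ u, law P U u * E (cl P X U u) + ∑ w, law Q W w * E (cl Q Y W w)) := by
  have h : ∀ u, _ := fun u => lem2 hB hη hL hβ hβ1 (isPr_cl hP X U u) (law Q W) (isPr_law hQ W)
    (cl Q Y W) (isPr_cl hQ Y W) (rob_cond hQ Y W hr)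
  have h2 := Finset.sum_le_sum (s := Finset.univ) fun u _ =>
    mul_le_mul_of_nonneg_left (h u) (law_nonneg hP U u)
  have hPU := (isPr_law hP U).2
  have hQW := (isPr_law hQ W).2
  have e1 : ∑ u, law P U u * ∑ w, law Q W w * (E (cl P X U u) + E (cl Q Y W w)
      - hs (cl P X U u) (cl Q Y W w)) = ∑ u, law P U u * E (cl P X U u)
      + ∑ w, law Q W w * E (cl Q Y W w)
      - ∑ u, ∑ w, law P U u * law Q W w * hs (cl P X U u) (cl Q Y W w) := by
    have : ∀ u, law P U u * ∑ w, law Q W w * (E (cl P X U u) + E (cl Q Y W w)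
      - hs (cl P X U u) (cl Q Y W w)) = law P U u * E (cl P X U u)
        + law P U u * ∑ w, law Q W w * E (cl Q Y W w)
        - ∑ w, law P U u * law Q W w * hs (cl P X U u) (cl Q Y W w) := by
      intro u
      simp only [mul_sub, mul_add, Finset.sum_sub_distrib, Finset.sum_add_distrib,
        ← Finset.sum_mul, hQW, one_mul, mul_assoc, ← Finset.mul_sum]
    simp only [this, Finset.sum_sub_distrib, Finset.sum_add_distrib, ← Finset.sum_mul, hPU, one_mul]
  have e2 : ∑ u, law P U u * ((η + β * L + β1 / β) *
      (E (cl P X U u) + ∑ w, law Q W w * E (cl Q Y W w))) = (η + β * L + β1 / β) *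
        (∑ u, law P U u * E (cl P X U u) + ∑ w, law Q W w * E (cl Q Y W w)) := by
    have : ∀ u, law P U u * ((η + β * L + β1 / β) *
      (E (cl P X U u) + ∑ w, law Q W w * E (cl Q Y W w))) = (η + β * L + β1 / β) *
       (law P U u * E (cl P X U u) + law P U u * ∑ w, law Q W w * E (cl Q Y W w)) := by
      intro u; ring
    simp only [this, ← Finset.mul_sum, Finset.sum_add_distrib, ← Finset.sum_mul, hPU, one_mul]
  rw [e1, e2] at h2
  exact h2

end four

section spp
variable {G : Type} [AddCommGroup G] [Module (ZMod 2) G] [Fintype G] {p q : G → ℝ}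

/-- regrouping of six variables -/
def eK : (G × G) × ((G × G) × (G × G)) ≃ (G × G) × ((G × G) × (G × G)) where
  toFun w := (w.2.1, (w.1, w.2.2))
  invFun w := (w.2.1, (w.1, w.2.2))
  left_inv _ := rfl
  right_inv _ := rfl

lemma spp (hp : IsPr p) (hq : IsPr q) :
    ∑ u, ∑ c, cv p q u * law (Pf p q) fC c * hs (cl (pr p q) Prod.fst (fun z => z.1 + z.2) u)
      (cl (Pf p q) fA fC c) ≤ hs p q + Jf p q - E p - E q - hs (cv p q) (cv p q) := by
  have h2 := isPr_pr hp hq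
  have h4 := isPr_Pf hp hq
  have hP := isPr_pr h2 h4
  have h := chain2 h2 h4 (Prod.fst : G × G → G) (fun z => z.1 + z.2) fA fC
  have hl : ∑ u, ∑ c, cv p q u * law (Pf p q) fC c * hs (cl (pr p q) Prod.fst (fun z => z.1 + z.2) u)
      (cl (Pf p q) fA fC c) = _ := h
  rw [hl]
  have hC : H (Pf p q) fC = hs p p + hs q q := H_fZS hp hq
  rw [hC]
  -- first submodularity
  have s1 := submod hP (fun z => (z.1.1 + fA z.2, z.1.1 + z.1.2)) (fun z => fA z.2 + fB z.2)
    (fun z => fS z.2)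
  rw [H_snd h2 (Pf p q) fS, H_snd h2 (Pf p q) (fun w => (fA w + fB w, fS w)), H_fZS hp hq,
    H_fS] at s1
  have s1' : H (pr (pr p q) (Pf p q)) (fun z => (z.1.1 + fA z.2, (z.1.1 + z.1.2, fC z.2))) ≤
      H (pr (pr p q) (Pf p q)) (fun w => ((w.1.1 + fA w.2, w.1.1 + w.1.2), fA w.2 + fB w.2, fS w.2)) := by
    apply H_le hP
    intro w v
    simp only [fC, Prod.mk.injEq]
    rintro ⟨⟨a, b⟩, c, d⟩
    exact ⟨a, b, c, d⟩
  -- second submodularity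
  have s2 := submod hP (fun z => z.1.1)
    (fun z => (z.1.1 + z.2.2.2, z.2.2.1 + z.2.2.2, z.2.1.1, z.2.1.2))
    (fun z => ((z.1.1 + fA z.2, z.1.1 + z.1.2), fS z.2))
  have t1 : H (pr (pr p q) (Pf p q)) (fun z => z) ≤ H (pr (pr p q) (Pf p q))
      (fun z => (z.1.1, (z.1.1 + z.2.2.2, z.2.2.1 + z.2.2.2, z.2.1.1, z.2.1.2),
        ((z.1.1 + fA z.2, z.1.1 + z.1.2), fS z.2))) := by
    apply H_le hP
    rintro ⟨⟨x, y⟩, ⟨x1, y1⟩, ⟨x2, y2⟩⟩ ⟨⟨x', y'⟩, ⟨x1', y1'⟩, ⟨x2', y2'⟩⟩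
    simp only [Prod.mk.injEq]
    rintro ⟨a, ⟨b, c, d, e⟩, ⟨_, f⟩, _⟩
    rw [a] at b f
    have hb := add_left_cancel b
    rw [hb] at c
    exact ⟨⟨a, add_left_cancel f⟩, ⟨d, e⟩, add_right_cancel c, hb⟩
  rw [H_id, E_pr h2 h4, E_pr hp hq] at t1
  have t1' : E (Pf p q) = 2 * (E p + E q) := by
    unfold Pf; rw [E_pr h2 h2, E_pr hp hq]; ring
  rw [t1'] at t1
  have t2 : H (pr (pr p q) (Pf p q)) (fun z => (z.1.1, ((z.1.1 + fA z.2, z.1.1 + z.1.2), fS z.2))) ≤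
      E p + E q + 2 * hs p q := by
    have e := H_pr h2 h4 (fun z => z) (fun w => (fA w, fS w))
    rw [H_id, E_pr hp hq, H_fAS hp hq] at e
    rw [← e]
    apply H_le hP
    intro w v
    simp only [Prod.mk.injEq]
    rintro ⟨a, b, c⟩
    exact ⟨by rw [a], ⟨by rw [a, b], by rw [a]⟩, c⟩
  have t3 : H (pr (pr p q) (Pf p q)) (fun z => ((z.1.1 + z.2.2.2, z.2.2.1 + z.2.2.2, z.2.1.1, z.2.1.2),
      ((z.1.1 + fA z.2, z.1.1 + z.1.2), fS z.2))) ≤ E p + E q + Jf p q := by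
    have e := H_pr h2 h4 (fun z => z) (fun w => (fA w, fB w, fS w))
    rw [H_id, E_pr hp hq, ← H_equiv eK (pr (pr p q) (Pf p q)) (pr (pr p q) (Pf p q))
      (fun w => by simp [Pf, pr, eK]; ring)] at e
    unfold Jf
    rw [← e]
    apply H_le hP
    rintro ⟨⟨x, y⟩, ⟨x1, y1⟩, ⟨x2, y2⟩⟩ ⟨⟨x', y'⟩, ⟨x1', y1'⟩, ⟨x2', y2'⟩⟩
    simp only [Prod.mk.injEq, eK, Equiv.coe_fn_mk, fA, fB, fS]
    rintro ⟨⟨a, b⟩, c, d, e⟩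
    have f : x2 + y2 = x2' + y2' := by rw [d] at e; exact add_left_cancel e
    subst a b
    refine ⟨⟨c, f, rfl, rfl⟩, ⟨?_, d⟩, by rw [f]⟩
    linear_combination (norm := (match_scalars <;> decide)) (1 : ZMod 2) • c
  have hr : H (pr p q) (fun z => z.1 + z.2) = hs p q := rfl
  rw [hr]
  linarith

end spp

section inv
variable {G : Type} [AddCommGroup G] [Module (ZMod 2) G] [Fintype G] {p q : G → ℝ}

/-- Ruzsa distance -/
def dd (p q : G → ℝ) : ℝ := hs p q - E p / 2 - E q / 2

lemma dd_nonneg (hp : IsPr p) (hq : IsPr q) : 0 ≤ dd p q := by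
  have := le_hs_left hp hq
  have := le_hs_right hp hq
  unfold dd; linarith

lemma dd_comm (p q : G → ℝ) : dd p q = dd q p := by
  unfold dd; rw [hs_comm]; ring

lemma cv_apply (p q : G → ℝ) (z : G) : cv p q z = ∑ y, q y * p (z - y) := by
  unfold cv
  rw [law_def, Fintype.sum_prod_type_right]
  refine Finset.sum_congr rfl fun y _ => ?_
  rw [Finset.sum_eq_single (z - y)]
  · simp [pr, mul_comm]
  · intro b _ hb
    rw [if_neg]
    intro h
    apply hb
    rw [← h]; simp
  · simp

lemma gibbs (hq : IsPr q) (N : ℝ) (hN : 0 < N) (s : Finset G) (hs : (s.card : ℝ) ≤ N)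
    (hsupp : ∀ w, q w ≠ 0 → w ∈ s) : E q ≤ log N := by
  have h1 : E q = ∑ w ∈ s, negMulLog (q w) := by
    unfold E
    symm
    apply Finset.sum_subset (Finset.subset_univ s)
    intro w _ hw
    by_contra h
    apply hw
    apply hsupp
    intro h0; apply h; rw [h0, negMulLog_zero]
  have h2 : ∑ w ∈ s, q w = 1 := by
    rw [← hq.2]
    apply Finset.sum_subset (Finset.subset_univ s)
    intro w _ hw
    by_contra h
    exact hw (hsupp w h)
  have key : ∀ w, negMulLog (q w) ≤ q w * log N + (1 / N - q w) := by
    intro w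
    rcases eq_or_lt_of_le (hq.1 w) with h0 | h0
    · rw [← h0]; simp; exact hN.le
    · have := log_le_sub_one_of_pos (show 0 < 1 / (N * q w) by positivity)
      rw [log_div one_ne_zero (by positivity), log_one, log_mul hN.ne' h0.ne'] at this
      have h3 := mul_le_mul_of_nonneg_left this h0.le
      have h4 : q w * (1 / (N * q w) - 1) = 1 / N - q w := by field_simp
      rw [h4] at h3
      unfold negMulLog
      linarith
  rw [h1]
  calc _ ≤ ∑ w ∈ s, (q w * log N + (1 / N - q w)) := Finset.sum_le_sum fun w _ => key w
    _ = log N + (s.card / N - 1) := by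
      rw [Finset.sum_add_distrib, ← Finset.sum_mul, Finset.sum_sub_distrib, h2]
      simp; ring
    _ ≤ log N := by
      have : (s.card : ℝ) / N ≤ 1 := by rw [div_le_one hN]; exact hs
      linarith

/-- stabilizer -/
def stab (p : G → ℝ) : Submodule (ZMod 2) G :=
  AddSubgroup.toZModSubmodule 2
    { carrier := {v | ∀ z, p (z + v) = p z}
      zero_mem' := by intro z; simp
      add_mem' := by
        intro a b ha hb z
        rw [← add_assoc, hb, ha]
      neg_mem' := by
        intro a ha z
        have := ha (z + -a)
        rw [← this]; simp }

lemma mem_stab {p : G → ℝ} {v : G} : v ∈ stab p ↔ ∀ z, p (z + v) = p z := by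
  simp [stab]

lemma E_qt_inv {m : G → ℝ} (hm : IsPr m) (V : Submodule (ZMod 2) G)
    (h : ∀ v ∈ V, ∀ z, m (z + v) = m z) : E m = E (qt V m) + ell V := by
  have hl : ∀ w, law m V.mkQ (V.mkQ w) = Nat.card V * m w := by
    intro w
    rw [law_def, ← Equiv.sum_comp (Equiv.addLeft w)]
    have : ∀ u, (if V.mkQ ((Equiv.addLeft w) u) = V.mkQ w then m ((Equiv.addLeft w) u) else 0) =
        if u ∈ V then m w else 0 := by
      intro u
      by_cases hu : u ∈ V
      · have : V.mkQ u = 0 := by simpa using hu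
        simp [hu, h u hu w]
      · have : V.mkQ u ≠ 0 := by simpa using hu
        simp [hu]
    simp only [this, ← Finset.sum_filter, Finset.sum_const, nsmul_eq_mul]
    congr 2
    rw [Nat.card_eq_fintype_card, Fintype.card_subtype]
  have e : E (qt V m) = H m V.mkQ := rfl
  rw [e, H_eq, ← H_id m, H_eq, law_id]
  have hV : (0 : ℝ) < Nat.card V := by exact_mod_cast (Nat.card_pos (α := V))
  have : ∀ w, m w * (-log (m w)) = m w * (-log (law m V.mkQ (V.mkQ w))) + m w * ell V := by
    intro w
    rcases eq_or_lt_of_le (hm.1 w) with h0 | h0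
    · simp [← h0]
    · rw [hl, log_mul hV.ne' h0.ne', ell]; ring
  simp only [this, Finset.sum_add_distrib, ← Finset.sum_mul, hm.2, one_mul]

lemma eq_case (hp : IsPr p) (hq : IsPr q) (h : hs p q ≤ E p) :
    E q ≤ ell (stab p) := by
  have hc : ∀ z, ∑ y, q y * negMulLog (p (z - y)) ≤ negMulLog (cv p q z) := by
    intro z
    rw [cv_apply]
    exact strictConcaveOn_negMulLog.concaveOn.le_map_sum (t := Finset.univ) (w := q)
      (p := fun y => p (z - y)) (fun i _ => hq.1 i) hq.2 (fun i _ => hp.1 _)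
  have hsum : ∑ z, ∑ y, q y * negMulLog (p (z - y)) = E p := by
    rw [Finset.sum_comm]
    have : ∀ y, ∑ z, q y * negMulLog (p (z - y)) = q y * E p := by
      intro y
      rw [← Finset.mul_sum]
      congr 1
      exact Equiv.sum_comp (Equiv.subRight y) (fun z => negMulLog (p z))
    simp only [this, ← Finset.sum_mul, hq.2, one_mul]
  have heq : ∀ z, ∑ y, q y * negMulLog (p (z - y)) = negMulLog (cv p q z) := by
    have h1 : ∑ z, ∑ y, q y * negMulLog (p (z - y)) = ∑ z, negMulLog (cv p q z) := by
      apply le_antisymm (Finset.sum_le_sum fun z _ => hc z)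
      rw [hsum]; exact h
    intro z
    exact (Finset.sum_eq_sum_iff_of_le (fun z _ => hc z)).1 h1 z (Finset.mem_univ z)
  have hpt : ∀ z y, q y ≠ 0 → p (z - y) = cv p q z := by
    intro z y hy
    have h2 := (strictConcaveOn_negMulLog.map_sum_eq_iff' (t := Finset.univ) (w := q)
      (p := fun y => p (z - y)) (fun i _ => hq.1 i) hq.2 (fun i _ => hp.1 _)).1
      (by
        have := (heq z).symm
        rw [cv_apply] at this
        exact this) y (Finset.mem_univ y) hy
    rw [cv_apply]
    exact h2
  obtain ⟨y0, hy0⟩ : ∃ y, q y ≠ 0 := by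
    by_contra hne
    push Not at hne
    have := hq.2
    simp [hne] at this
  have hV : (0 : ℝ) < Nat.card (stab p) := by exact_mod_cast (Nat.card_pos (α := stab p))
  apply gibbs hq _ hV (Finset.univ.image fun v : stab p => y0 + (v : G))
  · have := Finset.card_image_le (s := Finset.univ) (f := fun v : stab p => y0 + (v : G))
    rw [Finset.card_univ] at this
    rw [Nat.card_eq_fintype_card]
    exact_mod_cast this
  · intro y hy
    simp only [Finset.mem_image, Finset.mem_univ, true_and, Subtype.exists]
    refine ⟨y - y0, ?_, by simp⟩
    rw [mem_stab]
    intro z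
    have e1 := hpt (z + y) y hy
    have e2 := hpt (z + y) y0 hy0
    rw [show z + (y - y0) = z + y - y0 by abel, e2, ← e1]; simp

end inv

section tau
variable {G : Type} [AddCommGroup G] [Module (ZMod 2) G] [Fintype G] {p q p0 q0 : G → ℝ}

/-- the functional to be minimized -/
def tau (p0 q0 p q : G → ℝ) : ℝ := dd p q + 1 / 20 * (dd p0 p + dd q0 q)

lemma cont_E {X A : Type*} [TopologicalSpace X] [Fintype A] {f : X → A → ℝ} (hf : Continuous f) :
    Continuous (fun x => E (f x)) := by
  unfold E
  refine continuous_finset_sum _ fun a _ => continuous_negMulLog.comp ?_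
  exact (continuous_apply a).comp hf

lemma cont_hs {X : Type*} [TopologicalSpace X] {f g : X → G → ℝ} (hf : Continuous f)
    (hg : Continuous g) : Continuous (fun x => hs (f x) (g x)) := by
  have : (fun x => hs (f x) (g x)) = fun x => E (cv (f x) (g x)) := rfl
  rw [this]
  apply cont_E
  refine continuous_pi fun z => ?_
  simp only [cv_apply]
  refine continuous_finset_sum _ fun y _ => ?_
  exact ((continuous_apply y).comp hg).mul ((continuous_apply (z - y)).comp hf)

lemma tau_min (hp0 : IsPr p0) (hq0 : IsPr q0) : ∃ p q : G → ℝ, IsPr p ∧ IsPr q ∧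
    ∀ p' q' : G → ℝ, IsPr p' → IsPr q' → tau p0 q0 p q ≤ tau p0 q0 p' q' := by
  have hK := (isCompact_stdSimplex ℝ G).prod (isCompact_stdSimplex ℝ G)
  have hc : Continuous (fun z : (G → ℝ) × (G → ℝ) => tau p0 q0 z.1 z.2) := by
    unfold tau dd
    have a1 := cont_hs (G := G) (continuous_fst (X := G → ℝ) (Y := G → ℝ))
      (continuous_snd (X := G → ℝ) (Y := G → ℝ))
    have a2 := cont_hs (G := G) (f := fun _ : (G → ℝ) × (G → ℝ) => p0) continuous_const
      (continuous_fst (X := G → ℝ) (Y := G → ℝ))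
    have a3 := cont_hs (G := G) (f := fun _ : (G → ℝ) × (G → ℝ) => q0) continuous_const
      (continuous_snd (X := G → ℝ) (Y := G → ℝ))
    have a4 := cont_E (continuous_fst (X := G → ℝ) (Y := G → ℝ))
    have a5 := cont_E (continuous_snd (X := G → ℝ) (Y := G → ℝ))
    fun_prop
  obtain ⟨z, hz, hmin⟩ := hK.exists_isMinOn ⟨(p0, q0), hp0, hq0⟩ hc.continuousOn
  exact ⟨z.1, z.2, hz.1, hz.2, fun p' q' hp' hq' => hmin (a := (p', q')) ⟨hp', hq'⟩⟩

lemma avg1 {I : Type} [Fintype I] {Q : I → ℝ} (hQ : IsPr Q) (f g : I → G → ℝ) {k : ℝ}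
    (h : ∀ i, k ≤ tau p0 q0 (f i) (g i)) :
    k ≤ ∑ i, Q i * hs (f i) (g i) - (∑ i, Q i * E (f i)) / 2 - (∑ i, Q i * E (g i)) / 2
      + 1 / 20 * (∑ i, Q i * hs p0 (f i) - E p0 / 2 - (∑ i, Q i * E (f i)) / 2
        + (∑ i, Q i * hs q0 (g i) - E q0 / 2 - (∑ i, Q i * E (g i)) / 2)) := by
  have h1 : ∑ i, Q i * k ≤ ∑ i, Q i * tau p0 q0 (f i) (g i) :=
    Finset.sum_le_sum fun i _ => mul_le_mul_of_nonneg_left (h i) (hQ.1 i)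
  rw [← Finset.sum_mul, hQ.2, one_mul] at h1
  refine h1.trans (le_of_eq ?_)
  have : ∀ i, Q i * tau p0 q0 (f i) (g i) = Q i * hs (f i) (g i) - (Q i * E (f i)) / 2
      - (Q i * E (g i)) / 2 + 1 / 20 * (Q i * hs p0 (f i) - Q i * (E p0 / 2) - (Q i * E (f i)) / 2
        + (Q i * hs q0 (g i) - Q i * (E q0 / 2) - (Q i * E (g i)) / 2)) := by
    intro i; unfold tau dd; ring
  simp only [this, Finset.sum_add_distrib, Finset.sum_sub_distrib, ← Finset.mul_sum,
    ← Finset.sum_div, ← Finset.sum_mul, hQ.2, one_mul]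

lemma avg2 {I I' : Type} [Fintype I] [Fintype I'] {Q : I → ℝ} {Q' : I' → ℝ} (hQ : IsPr Q)
    (hQ' : IsPr Q') (f : I → G → ℝ) (g : I' → G → ℝ) {k : ℝ}
    (h : ∀ i j, k ≤ tau p0 q0 (f i) (g j)) :
    k ≤ ∑ i, ∑ j, Q i * Q' j * hs (f i) (g j) - (∑ i, Q i * E (f i)) / 2 - (∑ i, Q' i * E (g i)) / 2
      + 1 / 20 * (∑ i, Q i * hs p0 (f i) - E p0 / 2 - (∑ i, Q i * E (f i)) / 2
        + (∑ i, Q' i * hs q0 (g i) - E q0 / 2 - (∑ i, Q' i * E (g i)) / 2)) := by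
  have h1 := avg1 (p0 := p0) (q0 := q0) (isPr_pr hQ hQ') (fun z => f z.1) (fun z => g z.2)
    (fun z => h z.1 z.2)
  have e1 : ∀ F : I → ℝ, ∑ z, pr Q Q' z * F z.1 = ∑ i, Q i * F i := by
    intro F
    rw [Fintype.sum_prod_type]
    refine Finset.sum_congr rfl fun i _ => ?_
    simp only [pr]
    rw [← Finset.sum_mul, ← Finset.mul_sum, hQ'.2, mul_one]
  have e2 : ∀ F : I' → ℝ, ∑ z, pr Q Q' z * F z.2 = ∑ i, Q' i * F i := by
    intro F
    rw [Fintype.sum_prod_type_right]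
    refine Finset.sum_congr rfl fun i _ => ?_
    simp only [pr]
    rw [← Finset.sum_mul, ← Finset.sum_mul, hQ.2, one_mul]
  rw [e1 (fun i => E (f i)), e1 (fun i => hs p0 (f i)), e2 (fun i => E (g i)),
    e2 (fun i => hs q0 (g i)), Fintype.sum_prod_type] at h1
  exact h1

lemma tau_zero (hp0 : IsPr p0) (hq0 : IsPr q0) (hp : IsPr p) (hq : IsPr q)
    (hmin : ∀ p' q' : G → ℝ, IsPr p' → IsPr q' → tau p0 q0 p q ≤ tau p0 q0 p' q') :
    dd p q ≤ 0 := by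
  have hpq := isPr_pr hp hq
  have h4 := isPr_Pf hp hq
  have hcv := isPr_cv hp hq
  -- variant 1, sums
  have a1 := hmin _ _ hcv hcv
  have b1 := KV hp0 hp hq
  have b2 := KV hq0 hq hp
  rw [cv_comm q p, hs_comm q p] at b2
  -- variant 1, fibres
  have a2 := avg2 (p0 := p0) (q0 := q0) hcv hcv
    (cl (pr p q) Prod.fst (fun z => z.1 + z.2)) (cl (pr p q) Prod.snd (fun z => z.1 + z.2))
    (fun i j => hmin _ _ (isPr_cl hpq _ _ i) (isPr_cl hpq _ _ j))
  have c1 := hs_cond hpq Prod.fst (fun z => z.1 + z.2) hp0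
  have c2 := hs_cond hpq Prod.snd (fun z => z.1 + z.2) hq0
  rw [law_fst' hq] at c1
  rw [law_snd' hp] at c2
  change ∑ w, cv p q w * _ ≤ _ at c1
  change ∑ w, cv p q w * _ ≤ _ at c2
  rw [var1 hp hq, EX hp hq, EY hp hq] at a2
  -- variant 2, sums
  have a3 := hmin _ _ (isPr_cv hp hp) (isPr_cv hq hq)
  have b3 := KV hp0 hp hp
  have b4 := KV hq0 hq hq
  -- variant 2, fibres
  have a4 := avg2 (p0 := p0) (q0 := q0) (isPr_cv hp hp) (isPr_cv hq hq)
    (cl (pr p p) Prod.fst (fun z => z.1 + z.2)) (cl (pr q q) Prod.fst (fun z => z.1 + z.2))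
    (fun i j => hmin _ _ (isPr_cl (isPr_pr hp hp) _ _ i) (isPr_cl (isPr_pr hq hq) _ _ j))
  have c3 := hs_cond (isPr_pr hp hp) Prod.fst (fun z => z.1 + z.2) hp0
  have c4 := hs_cond (isPr_pr hq hq) Prod.fst (fun z => z.1 + z.2) hq0
  rw [law_fst' hp] at c3
  rw [law_fst' hq] at c4
  change ∑ w, cv p p w * _ ≤ _ at c3
  change ∑ w, cv q q w * _ ≤ _ at c4
  rw [var2 hp hq, EX hp hp, EX hq hq] at a4
  -- endgame
  have a5 := avg1 (p0 := p0) (q0 := q0) (isPr_law h4 fC) (cl (Pf p q) fA fC) (cl (Pf p q) fB fC)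
    (fun i => hmin _ _ (isPr_cl h4 _ _ i) (isPr_cl h4 _ _ i))
  have c5 := hs_cond h4 fA fC hp0
  have c6 := hs_cond h4 fB fC hq0
  rw [H_fA hp hq] at c5
  rw [H_fB hp hq] at c6
  rw [EA4 hp hq, EB4 hp hq] at a5
  have c7 := bsg4 hp hq
  have t1 := tri hp hp hq
  have t2 := tri hq hq hp
  rw [hs_comm q p] at t2
  have i1 := I1_nonneg hp hq
  have i2 := I2_nonneg hp hq
  unfold tau dd at *
  rw [hs_cv_cv hp hq, ← hs_eq, ← hs_eq] at a3
  rw [← hs_eq] at a1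
  linarith

lemma weakPFR (hp0 : IsPr p0) (hq0 : IsPr q0) : ∃ V : Submodule (ZMod 2) G,
    ell V ≤ 23 * (E p0 + E q0) ∧ E (qt V p0) ≤ 44 * dd p0 q0 := by
  obtain ⟨p, q, hp, hq, hmin⟩ := tau_min hp0 hq0
  have hz := tau_zero hp0 hq0 hp hq hmin
  have hz0 := dd_nonneg hp hq
  have h1 := le_hs_left hp hq
  have h2 := le_hs_right hp hq
  have hE : hs p q ≤ E p := by unfold dd at hz; linarith
  have hEq : E q = E p := by unfold dd at hz; linarith
  have h3 := eq_case hp hq hE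
  have hcv := isPr_cv hp0 hp
  have h4 := E_qt_inv hp (stab p) (fun v hv => mem_stab.1 hv)
  have h5 := E_qt_inv hcv (stab p) (by
    intro v hv z
    rw [cv_comm, cv_apply, cv_apply]
    refine Finset.sum_congr rfl fun y _ => ?_
    rw [show z + v - y = z - y + v by abel, mem_stab.1 hv])
  have h6 := hmin q0 p0 hq0 hp0
  have h7 := dd_nonneg hp0 hp
  have h8 := dd_nonneg hq0 hq
  unfold tau at h6
  rw [dd_comm q0 p0] at h6
  have h9 : dd p0 p ≤ 22 * dd p0 q0 := by linarith
  have h10 : E (qt (stab p) p0) ≤ E (qt (stab p) (cv p0 p)) := by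
    rw [qt_cv]; exact le_hs_left (isPr_qt hp0 _) (isPr_qt hp _)
  have h11 := E_nonneg (isPr_qt hp (stab p))
  have h12 := le_hs_left hp0 hp
  have h13 := le_hs_right hp0 hp
  have h14 := hs_le hp0 hq0
  have h15 := E_nonneg hp0
  have h16 := E_nonneg hq0
  rw [← hs_eq] at h5
  refine ⟨stab p, ?_, ?_⟩
  · unfold dd at *; linarith
  · unfold dd at *; linarith

end tau

section main
variable {G : Type} [AddCommGroup G] [Module (ZMod 2) G] [Fintype G] {p q : G → ℝ}

lemma sppW {β1 : ℝ} (hβ1 : 0 ≤ β1) (hp : IsPr p) (hq : IsPr q) (hr : rob β1 p) :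
    2 * (E p + E q) - Jf p q ≤ 46 * β1 * (Jf p q - hs p p - hs q q)
      + 44 * (8 * hs p q - 3 * hs (cv p q) (cv p q) - 3 * Jf p q + 2 * hs p p + 2 * hs q q)
      + (2 * hs p q + hs p p + hs q q - hs (cv p q) (cv p q) - Jf p q) := by
  have hpq := isPr_pr hp hq
  have h4 := isPr_Pf hp hq
  have hcv := isPr_cv hp hq
  set f : G → G → ℝ := cl (pr p q) Prod.fst (fun z => z.1 + z.2) with hf
  set g : G × G → G → ℝ := cl (Pf p q) fA fC with hg
  set g' : G × G → G → ℝ := cl (Pf p q) fB fC with hg'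
  set μ := law (Pf p q) fC with hμ
  have hμp : IsPr μ := isPr_law h4 fC
  have h0 := spp hp hq
  have hEX := EX hp hq
  have hEA := EA4 hp hq
  have hEB := EB4 hp hq
  have hbsg := bsg4 hp hq
  rw [← hf] at hEX h0
  rw [← hg, ← hμ] at hEA h0 hbsg
  rw [← hg'] at hbsg hEB
  rw [← hμ] at hEB
  have hfp : ∀ u, IsPr (f u) := fun u => isPr_cl hpq _ _ u
  have hgp : ∀ u, IsPr (g u) := fun u => isPr_cl h4 _ _ u
  have hgp' : ∀ u, IsPr (g' u) := fun u => isPr_cl h4 _ _ u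
  have hrob : ∀ V : Submodule (ZMod 2) G, ∑ u, cv p q u * (E (f u) - E (qt V (f u))) ≤ β1 * ell V := by
    intro V
    exact rob_cond hpq Prod.fst (fun z => z.1 + z.2) (by rw [law_fst' hq]; exact hr) V
  have key : ∀ c, ∑ u, cv p q u * (E (f u) + E (g c) - hs (f u) (g c)) ≤
      β1 * (23 * (E (g c) + E (g' c))) + 44 * (hs (g c) (g' c) - E (g c) / 2 - E (g' c) / 2) := by
    intro c
    obtain ⟨V, v1, v2⟩ := weakPFR (hgp c) (hgp' c)
    have : ∀ u, cv p q u * (E (f u) + E (g c) - hs (f u) (g c)) ≤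
        cv p q u * (E (f u) - E (qt V (f u))) + cv p q u * E (qt V (g c)) := by
      intro u
      rw [← mul_add]
      apply mul_le_mul_of_nonneg_left _ (hcv.1 u)
      have a1 := lemQ (hfp u) (hgp c) V
      have a2 := le_hs_left (isPr_qt (hfp u) V) (isPr_qt (hgp c) V)
      linarith
    have h5 := Finset.sum_le_sum (s := Finset.univ) fun u _ => this u
    rw [Finset.sum_add_distrib, ← Finset.sum_mul, hcv.2, one_mul] at h5
    have h6 := hrob V
    have h7 := mul_le_mul_of_nonneg_left v1 hβ1
    unfold dd at v2
    linarith
  have h5 := Finset.sum_le_sum (s := Finset.univ) fun c _ =>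
    mul_le_mul_of_nonneg_left (key c) (hμp.1 c)
  have e1 : ∑ c, μ c * ∑ u, cv p q u * (E (f u) + E (g c) - hs (f u) (g c)) =
      ∑ u, cv p q u * E (f u) + ∑ c, μ c * E (g c)
        - ∑ u, ∑ c, cv p q u * μ c * hs (f u) (g c) := by
    have : ∀ c, μ c * ∑ u, cv p q u * (E (f u) + E (g c) - hs (f u) (g c)) =
        μ c * ∑ u, cv p q u * E (f u) + μ c * E (g c) - ∑ u, cv p q u * μ c * hs (f u) (g c) := by
      intro c
      simp only [mul_sub, mul_add, Finset.sum_sub_distrib, Finset.sum_add_distrib,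
        ← Finset.sum_mul, hcv.2, one_mul]
      congr 1
      rw [Finset.mul_sum]
      refine Finset.sum_congr rfl fun u _ => ?_
      ring
    simp only [this, Finset.sum_sub_distrib, Finset.sum_add_distrib, ← Finset.sum_mul, hμp.2, one_mul]
    congr 1
    exact Finset.sum_comm
  have e2 : ∑ c, μ c * (β1 * (23 * (E (g c) + E (g' c)))
      + 44 * (hs (g c) (g' c) - E (g c) / 2 - E (g' c) / 2)) =
      β1 * 23 * (∑ c, μ c * E (g c) + ∑ c, μ c * E (g' c))
      + 44 * (∑ c, μ c * hs (g c) (g' c) - (∑ c, μ c * E (g c)) / 2 - (∑ c, μ c * E (g' c)) / 2) := by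
    have : ∀ c, μ c * (β1 * (23 * (E (g c) + E (g' c)))
      + 44 * (hs (g c) (g' c) - E (g c) / 2 - E (g' c) / 2)) =
      β1 * 23 * (μ c * E (g c) + μ c * E (g' c))
      + 44 * (μ c * hs (g c) (g' c) - (μ c * E (g c)) / 2 - (μ c * E (g' c)) / 2) := by
      intro c; ring
    simp only [this, Finset.sum_sub_distrib, Finset.sum_add_distrib, ← Finset.mul_sum,
      ← Finset.sum_div]
  rw [e1, e2, hEX, hEA, hEB] at h5
  linarith

lemma core_num {η κ β1 e x y r a b S J : ℝ} (hη : 0 < η) (hη2 : η ≤ 1 / 2)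
    (hκ : κ = η ^ 2 / 1080) (hκ0 : 0 < κ) (hκ1 : κ ≤ 1 / 1080) (hβ0 : 0 < β1)
    (hβs : β1 ≤ κ ^ 2 / 4) (he : e = η + κ) (hx : 0 ≤ x) (hy : 0 ≤ y) (hrle : r ≤ x + y)
    (A1' : r + r - S ≤ e * (r + r)) (A2' : a + b - S ≤ e * (a + b))
    (A3 : (x + y - r) + (x + y - r) - (J - 2 * r) ≤ e * ((x + y - r) + (x + y - r)))
    (A4 : (x + x - a) + (y + y - b) - (J - a - b) ≤ e * ((x + x - a) + (y + y - b)))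
    (I1 : J + S ≤ 4 * r) (I2 : J + S ≤ 2 * r + a + b)
    (B1 : 2 * (x + y) - J ≤ 46 * β1 * (J - a - b)
      + 44 * (8 * r - 3 * S - 3 * J + 2 * a + 2 * b)
      + (2 * r + a + b - S - J)) : x + y - r ≤ (η - η ^ 2 / 360) * (x + y) := by
  have he0 : 0 < e := by linarith
  have hJ : J - a - b ≤ 2 * e * (x + y) := by
    have : e * r ≤ e * (x + y) := mul_le_mul_of_nonneg_left hrle (by positivity)
    linarith
  have hJ2 : 46 * β1 * (J - a - b) ≤ 92 * β1 * e * (x + y) := by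
    have := mul_le_mul_of_nonneg_left hJ (show 0 ≤ 46 * β1 by positivity)
    linarith
  have key : (268 + 2 * e) * (x + y - r) ≤ e * (x + y) * (268 + 92 * β1) := by
    linarith
  have he1 : e ≤ 1 := by linarith
  have hb92 : 92 * β1 ≤ e := by
    have : κ ^ 2 ≤ κ * (1 / 1080) := by rw [pow_two]; exact mul_le_mul_of_nonneg_left hκ1 hκ0.le
    linarith
  have key2 : (268 + 2 * e) * (x + y - r) ≤ (268 + 2 * e) * ((e - e ^ 2 / 270) * (x + y)) := by
    refine key.trans ?_
    have h1 : e * (268 + 92 * β1) ≤ (268 + 2 * e) * (e - e ^ 2 / 270) := by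
      have : 268 + 92 * β1 ≤ (268 + 2 * e) * (1 - e / 270) := by
        nlinarith [mul_nonneg he0.le (sub_nonneg.2 he1)]
      calc _ ≤ e * ((268 + 2 * e) * (1 - e / 270)) := mul_le_mul_of_nonneg_left this he0.le
        _ = _ := by ring
    have := mul_le_mul_of_nonneg_right h1 (show 0 ≤ x + y by linarith)
    linarith
  have key3 : x + y - r ≤ (e - e ^ 2 / 270) * (x + y) :=
    le_of_mul_le_mul_left key2 (by linarith)
  refine key3.trans (mul_le_mul_of_nonneg_right ?_ (by linarith))
  have : η ^ 2 ≤ e ^ 2 := by gcongr; linarith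
  rw [hκ] at he
  linarith

/-- the numerical core of the main step -/
lemma core {η L κ β1 : ℝ} (hB : Bd η L) (hη : 0 < η) (hη2 : η ≤ 1 / 2) (hL : 1 ≤ L)
    (hκ : κ = η ^ 2 / 1080) (hβ1 : β1 = κ ^ 2 / (4 * L)) (hp : IsPr p) (hq : IsPr q)
    (rp : rob β1 p) (rq : rob β1 q) (rpq : rob β1 (cv p q)) (rpp : rob β1 (cv p p)) :
    E p + E q - hs p q ≤ (η - η ^ 2 / 360) * (E p + E q) := by
  have hκ0 : 0 < κ := by rw [hκ]; positivity
  have hκ1 : κ ≤ 1 / 1080 := by rw [hκ]; nlinarith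
  have hκη : κ ≤ η := by rw [hκ]; nlinarith
  have hL0 : 0 < L := by linarith
  have hβ0 : 0 < β1 := by rw [hβ1]; positivity
  have hβL : β1 * L = κ ^ 2 / 4 := by rw [hβ1]; field_simp
  have hβs : β1 ≤ κ ^ 2 / 4 := by nlinarith
  have hpq := isPr_pr hp hq
  have hcv := isPr_cv hp hq
  have A1 := lem1 hB hη.le hβ0.le hcv hcv rpq
  have A2 := lem1 hB hη.le hβ0.le (isPr_cv hp hp) (isPr_cv hq hq) rpp
  have hβ : 0 < κ / (2 * L) := by positivity
  have A3 := lem2c hB hη.le hL0.le hβ hβ0.le hpq hpq Prod.fst (fun z => z.1 + z.2) Prod.snd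
    (fun z => z.1 + z.2) (by rw [law_snd' hp]; exact rq)
  have A4 := lem2c hB hη.le hL0.le hβ hβ0.le (isPr_pr hp hp) (isPr_pr hq hq) Prod.fst
    (fun z => z.1 + z.2) Prod.fst (fun z => z.1 + z.2) (by rw [law_fst' hq]; exact rq)
  have e1 : η + κ / (2 * L) * L + β1 / (κ / (2 * L)) = η + κ := by
    rw [hβ1]; field_simp; ring
  rw [e1] at A3 A4
  have v1 := var1 hp hq
  have v2 := var2 hp hq
  have x1 := EX hp hq
  have x2 := EY hp hq
  have x3 := EX hp hp
  have x4 := EX hq hq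
  unfold cv at v1 v2 x1 x2 x3 x4
  rw [v1, x1, x2] at A3
  rw [v2, x3, x4] at A4
  have B1 := sppW hβ0.le hp hq rp
  have I1 := I1_nonneg hp hq
  have I2 := I2_nonneg hp hq
  rw [hs_cv_cv hp hq, ← hs_eq, ← hs_eq] at A2
  rw [← hs_eq] at A1
  have hx := E_nonneg hp
  have hy := E_nonneg hq
  have hr0 : 0 ≤ hs p q := E_nonneg hcv
  have ha0 : 0 ≤ hs p p := E_nonneg (isPr_cv hp hp)
  have hb0 : 0 ≤ hs q q := E_nonneg (isPr_cv hq hq)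
  have hrle := hs_le hp hq
  set e := η + κ with he
  have hle : η + β1 * L ≤ e := by rw [hβL, he]; nlinarith
  have A1' := A1.trans (mul_le_mul_of_nonneg_right hle (by linarith))
  have A2' := A2.trans (mul_le_mul_of_nonneg_right hle (by linarith))
  exact core_num hη hη2 hκ hκ0 hκ1 hβ0 hβs he hx hy hrle A1' A2' A3 A4 I1 I2 B1

end main

lemma Bd_mono {η η' L L' : ℝ} (h : Bd η L) (h1 : η ≤ η') (h2 : L ≤ L') : Bd η' L' := by
  intro G _ _ _ p q hp hq
  obtain ⟨V, a, b⟩ := h G p q hp hq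
  have hx := E_nonneg hp
  have hy := E_nonneg hq
  have hx' := E_nonneg (isPr_qt hp V)
  have hy' := E_nonneg (isPr_qt hq V)
  exact ⟨V, a.trans (mul_le_mul_of_nonneg_right h2 (by linarith)),
    b.trans (mul_le_mul_of_nonneg_right h1 (by linarith))⟩

lemma Bd_base : Bd (1 / 2) 1 := by
  intro G _ _ _ p q hp hq
  have hx := E_nonneg hp
  have hy := E_nonneg hq
  refine ⟨⊥, by rw [ell_bot]; linarith, ?_⟩
  have h1 := le_hs_left (isPr_qt hp ⊥) (isPr_qt hq ⊥)
  have h2 := le_hs_right (isPr_qt hp ⊥) (isPr_qt hq ⊥)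
  linarith

lemma Bd_step {η L : ℝ} (hB : Bd η L) (hη : 0 < η) (hη2 : η ≤ 1 / 2) (hL : 1 ≤ L) :
    Bd (η - η ^ 2 / 360) (18662400 * (1 / η) ^ 4 * L) := by
  intro G _ _ _ p q hp hq
  set κ := η ^ 2 / 1080 with hκ
  set β1 := κ ^ 2 / (4 * L) with hβ1
  have hκ0 : 0 < κ := by rw [hκ]; positivity
  have hβ0 : 0 < β1 := by rw [hβ1]; positivity
  obtain ⟨V, h1, h2⟩ := argmin (ι := Fin 5) ![p, q, cv p q, cv p p, cv q q] (by
    intro i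
    fin_cases i
    · exact hp
    · exact hq
    · exact isPr_cv hp hq
    · exact isPr_cv hp hp
    · exact isPr_cv hq hq) hβ0.le
  refine ⟨V, ?_, ?_⟩
  · simp only [Fin.sum_univ_five] at h1
    have h1' : β1 * ell V ≤ E p + E q + hs p q + hs p p + hs q q := h1
    have a1 := hs_le hp hq
    have a2 := hs_le hp hp
    have a3 := hs_le hq hq
    have h3 : β1 * ell V ≤ 4 * (E p + E q) := by linarith
    have h4 : β1 * (18662400 * (1 / η) ^ 4 * L * (E p + E q)) = 4 * (E p + E q) := by
      rw [hβ1, hκ]; field_simp; ring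
    rw [← h4] at h3
    exact le_of_mul_le_mul_left h3 hβ0
  · have r0 := h2 0
    have r1 := h2 1
    have r2 := h2 2
    have r3 := h2 3
    change rob β1 (qt V p) at r0
    change rob β1 (qt V q) at r1
    change rob β1 (qt V (cv p q)) at r2
    change rob β1 (qt V (cv p p)) at r3
    rw [qt_cv] at r2 r3
    exact core hB hη hη2 hL hκ hβ1 (isPr_qt hp V) (isPr_qt hq V) r0 r1 r2 r3

lemma Bd_iter {X : ℝ} (hX : 2 ≤ X) (j : ℕ) :
    Bd (1 / min X (2 + j / 360)) ((18662400 * X ^ 4) ^ j) := by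
  have hM : 1 ≤ 18662400 * X ^ 4 := by
    have : (2 : ℝ) ^ 4 ≤ X ^ 4 := by gcongr
    linarith
  induction j with
  | zero =>
    have : min X (2 + ((0 : ℕ) : ℝ) / 360) = 2 := by simp [hX]
    rw [this, pow_zero]
    exact Bd_base
  | succ j ih =>
    set x := min X (2 + (j : ℝ) / 360) with hx
    set x' := min X (2 + ((j + 1 : ℕ) : ℝ) / 360) with hx'
    have hx2 : 2 ≤ x := le_min hX (by have : (0 : ℝ) ≤ j / 360 := by positivity
                                      linarith)
    have hxX : x ≤ X := min_le_left _ _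
    have hx'2 : 2 ≤ x' := le_min hX (by have : (0 : ℝ) ≤ ((j + 1 : ℕ) : ℝ) / 360 := by positivity
                                        linarith)
    have hxx' : x' ≤ x + 1 / 360 := by
      have h1 : x' ≤ X := min_le_left _ _
      have h2 : x' ≤ 2 + ((j + 1 : ℕ) : ℝ) / 360 := min_le_right _ _
      push_cast at h2
      rcases min_choice X (2 + (j : ℝ) / 360) with h | h
      · rw [hx, h]; linarith
      · rw [hx, h]; linarith
    have hMj : 1 ≤ (18662400 * X ^ 4) ^ j := one_le_pow₀ hM
    have hx0 : 0 < x := by linarith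
    refine Bd_mono (Bd_step ih (by positivity) (one_div_le_one_div_of_le (by norm_num) hx2) hMj) ?_ ?_
    · refine le_trans ?_ (one_div_le_one_div_of_le (by linarith) hxx')
      rw [le_div_iff₀ (by linarith)]
      have : (1 / x - (1 / x) ^ 2 / 360) * (x + 1 / 360) = 1 - (1 / x) ^ 2 / 129600 := by
        field_simp; ring
      rw [this]
      have : 0 ≤ (1 / x) ^ 2 / 129600 := by positivity
      linarith
    · rw [one_div_one_div, pow_succ (18662400 * X ^ 4), mul_comm ((18662400 * X ^ 4) ^ j)]
      gcongr


lemma Bd_final {η : ℝ} (hη : 0 < η) (hη2 : η ≤ 1 / 2) : Bd η (η ^ (-(10469 / η))) := by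
  set X := 1 / η with hX
  have hX2 : 2 ≤ X := by rw [hX, le_div_iff₀ hη]; linarith
  have hX0 : 0 < X := by linarith
  set j := ⌈360 * X⌉₊ with hj
  have h1 : 360 * X ≤ j := Nat.le_ceil _
  have h2 : (j : ℝ) < 360 * X + 1 := Nat.ceil_lt_add_one (by positivity)
  have hB := Bd_iter hX2 j
  have hm : min X (2 + (j : ℝ) / 360) = X := min_eq_left (by linarith)
  rw [hm] at hB
  refine Bd_mono hB (by rw [hX, one_div_one_div]) ?_
  have hM : 18662400 * X ^ 4 ≤ X ^ 29 := by
    have : (18662400 : ℝ) ≤ X ^ 25 := by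
      calc (18662400 : ℝ) ≤ 2 ^ 25 := by norm_num
        _ ≤ X ^ 25 := by gcongr
    calc 18662400 * X ^ 4 ≤ X ^ 25 * X ^ 4 := by gcongr
      _ = X ^ 29 := by ring
  have hηX : η = X⁻¹ := by rw [hX]; simp
  calc (18662400 * X ^ 4) ^ j ≤ (X ^ 29) ^ j := by gcongr
    _ = X ^ (29 * j) := by rw [pow_mul]
    _ = X ^ ((29 * j : ℕ) : ℝ) := by rw [rpow_natCast]
    _ ≤ X ^ (10469 * X) := by
      apply rpow_le_rpow_of_exponent_le (by linarith)
      push_cast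
      linarith
    _ = η ^ (-(10469 / η)) := by
      have e : (10469 / η) = 10469 * X := by rw [hX]; ring
      rw [e, hηX, inv_rpow hX0.le, rpow_neg hX0.le, inv_inv]

lemma ent_eq {A : Type*} [Fintype A] (p : A → ℝ) : ent p = E p := by
  unfold ent E
  exact finsum_eq_sum_of_fintype _

lemma push_eq {A B : Type*} [Fintype A] [Fintype B] (f : A → B) (p : A → ℝ) :
    push f p = law p f := by
  funext b
  unfold push law
  rw [finsum_mem_def, finsum_eq_sum_of_fintype]
  refine Finset.sum_congr rfl fun a _ => ?_
  simp [Set.indicator_apply]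

lemma conv_eq {A : Type} [AddCommGroup A] [Module (ZMod 2) A] [Fintype A] (p q : A → ℝ) :
    conv p q = cv p q := by
  funext z
  rw [cv_comm, cv_apply]
  unfold conv
  exact finsum_eq_sum_of_fintype _

lemma ent_unifOn {A : Type} [AddCommGroup A] [Module (ZMod 2) A] [Fintype A]
    (V : Submodule (ZMod 2) A) : ent (unifOn (V : Set A)) = ell V := by
  rw [ent_eq]
  unfold E unifOn ell
  have hc : (0 : ℝ) < Nat.card V := by exact_mod_cast Nat.card_pos
  have : ∀ a : A, negMulLog ((V : Set A).indicator (fun _ => (Nat.card (V : Set A) : ℝ)⁻¹) a) =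
      if a ∈ V then negMulLog ((Nat.card V : ℝ)⁻¹) else 0 := by
    intro a
    by_cases h : a ∈ V
    · simp [h]
    · simp [h]
  simp only [this]
  rw [← Finset.sum_filter, Finset.sum_const, nsmul_eq_mul]
  have h2 : ((Finset.univ.filter fun a => a ∈ V).card : ℝ) = Nat.card V := by
    rw [Nat.card_eq_fintype_card, Fintype.card_subtype]
  rw [h2, negMulLog, log_inv]
  field_simp

lemma isPr_of {A : Type*} [Fintype A] {p : A → ℝ} (h : IsDist p) : IsPr p :=
  ⟨h.1, by rw [← finsum_eq_sum_of_fintype]; exact h.2⟩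

lemma Bd_conv {η L : ℝ} (h : Bd η L) {A : Type} [AddCommGroup A] [Module (ZMod 2) A] [Fintype A]
    (p q : A → ℝ) (hp : IsDist p) (hq : IsDist q) : ∃ V : Submodule (ZMod 2) A,
      ent (unifOn (V : Set A)) ≤ L * (ent p + ent q) ∧ 0 ≤ ent p + ent q ∧
      ent (push V.mkQ p) + ent (push V.mkQ q) - ent (conv (push V.mkQ p) (push V.mkQ q)) ≤
        η * (ent (push V.mkQ p) + ent (push V.mkQ q)) := by
  have hp' := isPr_of hp
  have hq' := isPr_of hq
  obtain ⟨V, h1, h2⟩ := h A p q hp' hq'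
  have hx := E_nonneg hp'
  have hy := E_nonneg hq'
  refine ⟨V, ?_, ?_, ?_⟩
  · rw [ent_unifOn, ent_eq, ent_eq]
    exact h1
  · rw [ent_eq, ent_eq]
    linarith
  · rw [conv_eq, push_eq, push_eq, ent_eq, ent_eq, ent_eq]
    exact h2

end S19

/-- There is `C > 0` such that `B(η, η², η^{−C/η})` holds for all
`η ∈ (0, 1/2]`. -/
theorem statement19 :
    ∃ C : ℝ, 0 < C ∧ ∀ η : ℝ, 0 < η → η ≤ 1 / 2 → StB η (η ^ 2) (η ^ (-(C / η))) := by
  refine ⟨10469, by norm_num, fun η hη hη2 n p q hp hq => ?_⟩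
  obtain ⟨V, h1, h0, h2⟩ := S19.Bd_conv (S19.Bd_final hη hη2) p q hp hq
  refine ⟨V, h1, ?_⟩
  have : 0 ≤ η ^ 2 * (ent p + ent q) := mul_nonneg (sq_nonneg _) h0
  linarith
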